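/- arXiv:1302.2638 — 2 statements merged into one kernel-verified Lean document; each statement's English description precedes it below -/
import Mathlib

section
/- Let n be a positive integer and let α₁, α₂ be real parameters with α₁ ≥ 0 and α₂ > α₁ + 3n + 1. For G drawn from the real spherical ensemble of size 2n with parameters (α₁, α₂), and for every complex number z, ⟨det(z·I − G)·Tr(G)⟩ = −z^{2n−1}·(α₁+n)/(α₂ − (2n + α₁ + 1/2)). Consequently the odd-degree skew orthogonal polynomial Q_{2n+1}(z) := z·⟨det(z·I − G)⟩ + ⟨det(z·I − G)·Tr(G)⟩ equals z^{2n+1} − z^{2n−1}·(α₁+n)/(α₂ − (2n + α₁ + 1/2)). -/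
/-!
Conditionally on the other rows `H` of `G`, the first row `v` has a density proportional to
`(x ⬝ v) ^ (2 α₁) * det (I + Hᵀ H + v vᵀ) ^ (-α₂)`, where `x` is the vector of signed maximal minors
of `H`. A linear substitution turns it into a multivariate Cauchy density weighted by a power of
`⟪p, v⟫`. For a matrix `A` whose adjoint fixes `p`, differentiating the integral of that density
along the substitutions `v ↦ v + t A v` evaluates its moment `⟪v, A v⟫`. This expresses the mean
squared length of the first row through those of the others. Exchanging rows preserves the
ensemble, so these means are all equal, and the relation determines them.

Changing the sign of any row also preserves the ensemble. Averaging over all signs reduces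
`det (z I - G)` to `z ^ N`, and `det (z I - G) Tr G` to `-z ^ (N - 1) ∑ j, G j j ^ 2`. The mean of
this last sum is the mean squared length of one row, again by exchanging rows.
-/

open MeasureTheory Matrix

/-- The (unnormalized) density of the real spherical ensemble of size `N` with
parameters `(α₁, α₂)`: `det(Gᵀ G)^{α₁} det(I + Gᵀ G)^{-α₂}`. -/
noncomputable def sphericalRealWeight (N : ℕ) (α₁ α₂ : ℝ) (g : Fin N → Fin N → ℝ) : ℝ :=
  ((Matrix.of g)ᵀ * Matrix.of g).det ^ α₁ *
    (1 + (Matrix.of g)ᵀ * Matrix.of g).det ^ (-α₂)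

section Determinants

open scoped ComplexOrder

variable {𝕜 n : Type*} [RCLike 𝕜] [Fintype n] [DecidableEq n]

theorem one_add_sum_le_prod_one_add {ι R : Type*} [CommRing R] [PartialOrder R] [IsOrderedRing R]
    (s : Finset ι) {f : ι → R} (hf : ∀ i ∈ s, 0 ≤ f i) :
    1 + ∑ i ∈ s, f i ≤ ∏ i ∈ s, (1 + f i) := by
  classical
  induction s using Finset.induction_on with
  | empty => simp
  | insert a s ha ih =>
    rw [Finset.sum_insert ha, Finset.prod_insert ha]
    have hs : ∀ i ∈ s, 0 ≤ f i := fun i hi => hf i (Finset.mem_insert_of_mem hi)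
    have hfa : 0 ≤ f a := hf a (Finset.mem_insert_self a s)
    calc 1 + (f a + ∑ i ∈ s, f i)
        ≤ 1 + (f a + ∑ i ∈ s, f i) + f a * ∑ i ∈ s, f i :=
          le_add_of_nonneg_right (mul_nonneg hfa (Finset.sum_nonneg hs))
      _ = (1 + f a) * (1 + ∑ i ∈ s, f i) := by ring
      _ ≤ (1 + f a) * ∏ i ∈ s, (1 + f i) :=
          mul_le_mul_of_nonneg_left (ih hs) (add_nonneg zero_le_one hfa)

theorem det_one_add_eq_prod_eigenvalues {A : Matrix n n 𝕜} (hA : A.IsHermitian) :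
    (1 + A).det = ∏ i, (1 + (hA.eigenvalues i : 𝕜)) := by
  have h := A.eval_charpoly (-1)
  rw [hA.charpoly_eq, Polynomial.eval_prod, map_neg, map_one, ← neg_add', det_neg] at h
  have hneg : ∀ i, -1 - (hA.eigenvalues i : 𝕜) = -1 * (1 + hA.eigenvalues i) := fun i => by ring
  simp only [Polynomial.eval_sub, Polynomial.eval_X, Polynomial.eval_C, hneg,
    Finset.prod_mul_distrib, Finset.prod_const, Finset.card_univ] at h
  exact (mul_left_cancel₀ (pow_ne_zero _ (neg_ne_zero.2 one_ne_zero)) h).symm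

theorem one_add_trace_le_det_one_add {Q : Matrix n n 𝕜} (hQ : Q.PosSemidef) :
    1 + Q.trace ≤ (1 + Q).det := by
  rw [det_one_add_eq_prod_eigenvalues hQ.isHermitian, hQ.isHermitian.trace_eq_sum_eigenvalues]
  exact one_add_sum_le_prod_one_add _ fun i _ => by exact_mod_cast hQ.eigenvalues_nonneg i

open scoped MatrixOrder Matrix.Norms.L2Operator in
omit [DecidableEq n] in
theorem exists_eq_conjTranspose_mul_self {P : Matrix n n 𝕜} (hP : P.PosSemidef) :
    ∃ B : Matrix n n 𝕜, P = Bᴴ * B := by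
  classical
  exact CStarAlgebra.nonneg_iff_eq_star_mul_self.1 hP.nonneg

theorem det_le_det_add {P Q : Matrix n n 𝕜} (hP : P.PosSemidef) (hQ : Q.PosSemidef) :
    P.det ≤ (P + Q).det := by
  by_cases hdet : P.det = 0
  · exact hdet ▸ (hP.add hQ).det_nonneg
  obtain ⟨B, rfl⟩ := exists_eq_conjTranspose_mul_self hP
  have hB : IsUnit B.det := isUnit_iff_ne_zero.2 fun h => hdet (by rw [det_mul, h, mul_zero])
  have hQ' : (B⁻¹ᴴ * Q * B⁻¹).PosSemidef := hQ.conjTranspose_mul_mul_same B⁻¹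
  have hfactor : Bᴴ * B + Q = Bᴴ * (1 + B⁻¹ᴴ * Q * B⁻¹) * B := by
    have hcancel : Bᴴ * B⁻¹ᴴ = 1 := by
      rw [← conjTranspose_mul, nonsing_inv_mul _ hB, conjTranspose_one]
    simp only [mul_add, add_mul, mul_one, Matrix.mul_assoc, nonsing_inv_mul _ hB]
    rw [← Matrix.mul_assoc Bᴴ, hcancel, one_mul]
  calc (Bᴴ * B).det = (Bᴴ * B).det * 1 := (mul_one _).symm
    _ ≤ (Bᴴ * B).det * (1 + B⁻¹ᴴ * Q * B⁻¹).det :=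
        mul_le_mul_of_nonneg_left
          ((le_add_of_nonneg_right hQ'.trace_nonneg).trans (one_add_trace_le_det_one_add hQ'))
          hP.det_nonneg
    _ = (Bᴴ * B + Q).det := by rw [hfactor]; simp only [det_mul]; ring

end Determinants

section GramDet

variable {m n : Type*} [Fintype m]

theorem posSemidef_transpose_mul_self [Finite n] (g : m → n → ℝ) : ((of g)ᵀ * of g).PosSemidef :=
  posSemidef_conjTranspose_mul_self (of g)

theorem posDef_one_add_gram [Finite n] [DecidableEq n] (g : m → n → ℝ) :
    (1 + (of g)ᵀ * of g).PosDef :=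
  PosDef.one.add_posSemidef (posSemidef_transpose_mul_self g)

variable [Fintype n]

theorem trace_gram (g : m → n → ℝ) : ((of g)ᵀ * of g).trace = ∑ i, g i ⬝ᵥ g i := by
  simp only [trace, diag, mul_apply, transpose_apply, of_apply, dotProduct]
  exact Finset.sum_comm

variable [DecidableEq n]

/-- The determinant `det (I + Gᵀ G)`, for a rectangular real matrix `G` given by its entries. -/
noncomputable def gramDet (g : m → n → ℝ) : ℝ :=
  (1 + (of g)ᵀ * of g).det

theorem gramDet_pos (g : m → n → ℝ) : 0 < gramDet g :=
  (posDef_one_add_gram g).det_pos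

theorem one_add_sum_dotProduct_self_le_gramDet (g : m → n → ℝ) :
    1 + ∑ i, g i ⬝ᵥ g i ≤ gramDet g :=
  trace_gram g ▸ one_add_trace_le_det_one_add (posSemidef_transpose_mul_self g)

theorem det_gram_le_gramDet (g : m → n → ℝ) : ((of g)ᵀ * of g).det ≤ gramDet g := by
  rw [gramDet, add_comm]
  exact det_le_det_add (posSemidef_transpose_mul_self g) PosSemidef.one

theorem continuous_gramDet : Continuous (gramDet : (m → n → ℝ) → ℝ) :=
  have : Continuous fun g : m → n → ℝ => of g := continuous_id
  Continuous.matrix_det (by fun_prop)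

theorem dotProduct_self_le_gramDet (g : m → n → ℝ) (i : m) : g i ⬝ᵥ g i ≤ gramDet g :=
  calc g i ⬝ᵥ g i ≤ ∑ i, g i ⬝ᵥ g i :=
        Finset.single_le_sum (f := fun i => g i ⬝ᵥ g i)
          (fun _ _ => dotProduct_self_star_nonneg _) (Finset.mem_univ i)
    _ ≤ gramDet g := by linarith [one_add_sum_dotProduct_self_le_gramDet g]

theorem sq_le_gramDet (g : m → n → ℝ) (i : m) (j : n) : g i j ^ 2 ≤ gramDet g :=
  calc g i j ^ 2 = g i j * g i j := sq _
    _ ≤ g i ⬝ᵥ g i :=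
        Finset.single_le_sum (f := fun j => g i j * g i j)
          (fun _ _ => mul_self_nonneg _) (Finset.mem_univ j)
    _ ≤ gramDet g := dotProduct_self_le_gramDet g i

theorem one_le_gramDet (g : m → n → ℝ) : 1 ≤ gramDet g :=
  (le_add_of_nonneg_right (Finset.sum_nonneg fun _ _ => dotProduct_self_star_nonneg _)).trans
    (one_add_sum_dotProduct_self_le_gramDet g)

/-- The characteristic matrix `z I - G` of a real matrix `G`, with complex spectral parameter. -/
noncomputable def complexCharmatrix (z : ℂ) (g : n → n → ℝ) : Matrix n n ℂ :=
  z • 1 - (of g).map Complex.ofReal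

theorem conjTranspose_mul_self_smul_one_sub_add (z : ℂ) (G : Matrix n n ℂ) :
    (z • 1 - G)ᴴ * (z • 1 - G) + (1 + star z • G)ᴴ * (1 + star z • G) =
      ((1 + ‖z‖ ^ 2 : ℝ) : ℂ) • (1 + Gᴴ * G) := by
  have hnorm : ((1 + ‖z‖ ^ 2 : ℝ) : ℂ) = 1 + star z * z := by
    push_cast
    exact congrArg (1 + ·) (Complex.conj_mul' z).symm
  rw [hnorm]
  simp only [conjTranspose_sub, conjTranspose_add, conjTranspose_smul, conjTranspose_one,
    star_star, mul_add, add_mul, mul_sub, sub_mul, smul_mul_assoc, mul_smul_comm, one_mul, mul_one,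
    smul_add, smul_sub, add_smul, smul_smul, mul_comm z (star z), one_smul]
  abel

theorem det_one_add_conjTranspose_mul_self_map (g : n → n → ℝ) :
    (1 + ((of g).map Complex.ofReal)ᴴ * (of g).map Complex.ofReal).det = (gramDet g : ℂ) := by
  have hmap : 1 + ((of g).map Complex.ofReal)ᴴ * (of g).map Complex.ofReal =
      Complex.ofRealHom.mapMatrix (1 + (of g)ᵀ * of g) := by
    rw [map_add, map_one, map_mul]
    congr 2
    ext i j
    simp
  rw [hmap, ← RingHom.map_det]
  rfl

open scoped ComplexOrder in
theorem norm_det_complexCharmatrix_sq_le (z : ℂ) (g : n → n → ℝ) :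
    ‖(complexCharmatrix z g).det‖ ^ 2 ≤ (1 + ‖z‖ ^ 2) ^ Fintype.card n * gramDet g := by
  set A := complexCharmatrix z g
  have hnormSq : star A.det * A.det = ((‖A.det‖ ^ 2 : ℝ) : ℂ) := by
    push_cast
    exact Complex.conj_mul' _
  have hle := det_le_det_add (posSemidef_conjTranspose_mul_self A)
    (posSemidef_conjTranspose_mul_self (1 + star z • (of g).map Complex.ofReal))
  rw [show A = z • 1 - (of g).map Complex.ofReal from rfl,
    conjTranspose_mul_self_smul_one_sub_add, det_smul, det_one_add_conjTranspose_mul_self_map,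
    det_mul, det_conjTranspose] at hle
  exact_mod_cast hnormSq ▸ hle

end GramDet

section CauchyWeight

open Module Filter Topology
open scoped RealInnerProductSpace

theorem hasDerivAt_det_id_add_smul {𝕜 V : Type*} [NontriviallyNormedField 𝕜] [AddCommGroup V]
    [Module 𝕜 V] [FiniteDimensional 𝕜 V] (A : V →ₗ[𝕜] V) :
    HasDerivAt (fun t : 𝕜 => LinearMap.det (LinearMap.id + t • A)) (LinearMap.trace 𝕜 V A) 0 := by
  let e := finBasis 𝕜 V
  have hdet : (fun t : 𝕜 => LinearMap.det (LinearMap.id + t • A)) =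
      fun t => (1 + t • LinearMap.toMatrix e e A).det := by
    funext t
    rw [← LinearMap.det_toMatrix e, map_add, map_smul, LinearMap.toMatrix_id]
  rw [hdet, LinearMap.trace_eq_matrix_trace 𝕜 e, funext fun t => det_one_add_smul t _]
  refine (((hasDerivAt_const_mul _).const_add _).add
    ((Polynomial.hasDerivAt _ _).mul (hasDerivAt_pow 2 _))).congr_deriv ?_
  simp

section LinearSubstitution

variable {V F : Type*} [NormedAddCommGroup V] [NormedSpace ℝ V] [FiniteDimensional ℝ V]
  [MeasurableSpace V] [BorelSpace V] (μ : Measure V) [μ.IsAddHaarMeasure] [NormedAddCommGroup F]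
  {L : V →ₗ[ℝ] V}

theorem measurableEmbedding_of_det_ne_zero (hL : LinearMap.det L ≠ 0) : MeasurableEmbedding L :=
  (LinearMap.equivOfDetNeZero L hL).toContinuousLinearEquiv.toHomeomorph.measurableEmbedding

theorem integral_eq_abs_det_smul_integral_comp [NormedSpace ℝ F] (hL : LinearMap.det L ≠ 0)
    (f : V → F) : ∫ v, f v ∂μ = |LinearMap.det L| • ∫ v, f (L v) ∂μ := by
  rw [← (measurableEmbedding_of_det_ne_zero hL).integral_map,
    Measure.map_linearMap_addHaar_eq_smul_addHaar μ hL, integral_smul_measure,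
    ENNReal.toReal_ofReal (abs_nonneg _), abs_inv, smul_inv_smul₀ (abs_ne_zero.2 hL)]

theorem integrable_of_integrable_comp_linearMap (hL : LinearMap.det L ≠ 0) {f : V → F}
    (hf : Integrable (f ∘ L) μ) : Integrable f μ := by
  rw [← (measurableEmbedding_of_det_ne_zero hL).integrable_map_iff,
    Measure.map_linearMap_addHaar_eq_smul_addHaar μ hL] at hf
  exact (integrable_smul_measure (by simpa using hL) ENNReal.ofReal_ne_top).1 hf

end LinearSubstitution

variable {E : Type*} [NormedAddCommGroup E] [InnerProductSpace ℝ E] (A : E →L[ℝ] E)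

/-- The weight `⟪p, v⟫ ^ (2 a) * (1 + ‖v‖ ^ 2) ^ (-b)`, a multivariate Cauchy density weighted by a
power of a linear form. The even power is taken as `(⟪p, v⟫ ^ 2) ^ a` to allow real exponents. -/
noncomputable def cauchyWeight (p : E) (a b : ℝ) (v : E) : ℝ :=
  (⟪p, v⟫ ^ 2) ^ a * (1 + ‖v‖ ^ 2) ^ (-b)

theorem cauchyWeight_nonneg (p : E) (a b : ℝ) (v : E) : 0 ≤ cauchyWeight p a b v := by
  unfold cauchyWeight
  positivity

theorem continuous_cauchyWeight (p : E) {a : ℝ} (ha : 0 ≤ a) (b : ℝ) :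
    Continuous (cauchyWeight p a b) := by
  refine Continuous.mul (Continuous.rpow_const (by fun_prop) fun _ => Or.inr ha)
    (Continuous.rpow_const (by fun_prop) fun v => Or.inl ?_)
  positivity

theorem one_add_norm_sq_mul_cauchyWeight (p : E) (a b : ℝ) (v : E) :
    (1 + ‖v‖ ^ 2) * cauchyWeight p a b v = cauchyWeight p a (b - 1) v := by
  have hq : 0 < 1 + ‖v‖ ^ 2 := by positivity
  rw [cauchyWeight, cauchyWeight, neg_sub, sub_eq_add_neg, Real.rpow_add hq, Real.rpow_one]
  ring

theorem cauchyWeight_le (p : E) {a : ℝ} (ha : 0 ≤ a) (b : ℝ) (v : E) :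
    cauchyWeight p a b v ≤ (‖p‖ ^ 2) ^ a * (1 + ‖v‖ ^ 2) ^ (a - b) := by
  have hinner : ⟪p, v⟫ ^ 2 ≤ ‖p‖ ^ 2 * (1 + ‖v‖ ^ 2) :=
    calc ⟪p, v⟫ ^ 2 ≤ (‖p‖ * ‖v‖) ^ 2 :=
          sq_le_sq' (neg_le_of_abs_le (abs_real_inner_le_norm p v)) (real_inner_le_norm p v)
      _ ≤ ‖p‖ ^ 2 * (1 + ‖v‖ ^ 2) := by
          rw [mul_pow]
          gcongr
          linarith
  calc cauchyWeight p a b v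
      ≤ (‖p‖ ^ 2 * (1 + ‖v‖ ^ 2)) ^ a * (1 + ‖v‖ ^ 2) ^ (-b) := by
        unfold cauchyWeight
        gcongr
    _ = (‖p‖ ^ 2) ^ a * (1 + ‖v‖ ^ 2) ^ (a - b) := by
        rw [Real.mul_rpow (by positivity) (by positivity), mul_assoc,
          ← Real.rpow_add (by positivity), sub_eq_add_neg]

theorem norm_le_two_mul_norm_add_smul {t : ℝ} (ht : |t| * (2 * (‖A‖ + 1)) ≤ 1) (v : E) :
    ‖v‖ ≤ 2 * ‖v + t • A v‖ := by
  have hAv : ‖t • A v‖ ≤ |t| * (‖A‖ * ‖v‖) := by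
    rw [norm_smul, Real.norm_eq_abs]
    gcongr
    exact A.le_opNorm v
  have htri : ‖v‖ ≤ ‖v + t • A v‖ + ‖t • A v‖ := by
    simpa only [add_sub_cancel_right] using norm_sub_le (v + t • A v) (t • A v)
  nlinarith [norm_nonneg v, mul_nonneg (abs_nonneg t) (norm_nonneg v)]

theorem abs_two_mul_inner_mul_rpow_le {b : ℝ} (hb : 0 ≤ b) {v w : E} (hvw : ‖v‖ ≤ 2 * ‖w‖) :
    |2 * ⟪w, A v⟫ * (b * (1 + ‖w‖ ^ 2) ^ (-b - 1))| ≤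
      4 * ‖A‖ * b * 4 ^ b * (1 + ‖v‖ ^ 2) ^ (-b) := by
  have hq : 0 < 1 + ‖w‖ ^ 2 := by positivity
  have hinner : |2 * ⟪w, A v⟫| ≤ 4 * ‖A‖ * (1 + ‖w‖ ^ 2) :=
    calc |2 * ⟪w, A v⟫| = 2 * |⟪w, A v⟫| := by rw [abs_mul, abs_two]
      _ ≤ 2 * (‖w‖ * (‖A‖ * (2 * ‖w‖))) := by
          gcongr
          refine (abs_real_inner_le_norm _ _).trans ?_
          gcongr
          exact (A.le_opNorm v).trans (by gcongr)
      _ ≤ 4 * ‖A‖ * (1 + ‖w‖ ^ 2) := by nlinarith [norm_nonneg A]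
  have hbase : (1 + ‖v‖ ^ 2) / 4 ≤ 1 + ‖w‖ ^ 2 := by nlinarith [norm_nonneg v]
  calc |2 * ⟪w, A v⟫ * (b * (1 + ‖w‖ ^ 2) ^ (-b - 1))|
      = |2 * ⟪w, A v⟫| * (b * (1 + ‖w‖ ^ 2) ^ (-b - 1)) := by
        rw [abs_mul, abs_of_nonneg (by positivity : 0 ≤ b * (1 + ‖w‖ ^ 2) ^ (-b - 1))]
    _ ≤ 4 * ‖A‖ * (1 + ‖w‖ ^ 2) * (b * (1 + ‖w‖ ^ 2) ^ (-b - 1)) := by gcongr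
    _ = 4 * ‖A‖ * b * (1 + ‖w‖ ^ 2) ^ (-b) := by
        rw [Real.rpow_sub_one hq.ne']
        field_simp
    _ ≤ 4 * ‖A‖ * b * ((1 + ‖v‖ ^ 2) / 4) ^ (-b) := by
        gcongr 4 * ‖A‖ * b * ?_
        exact Real.rpow_le_rpow_of_nonpos (by positivity) hbase (neg_nonpos.2 hb)
    _ = 4 * ‖A‖ * b * 4 ^ b * (1 + ‖v‖ ^ 2) ^ (-b) := by
        rw [Real.div_rpow (by positivity) (by norm_num), Real.rpow_neg zero_le_four,
          div_inv_eq_mul]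
        ring

theorem hasDerivAt_rpow_one_add_norm_sq (b : ℝ) (v : E) (t : ℝ) :
    HasDerivAt (fun t : ℝ => (1 + ‖v + t • A v‖ ^ 2) ^ (-b))
      (-(2 * ⟪v + t • A v, A v⟫ * (b * (1 + ‖v + t • A v‖ ^ 2) ^ (-b - 1)))) t := by
  have hline : HasDerivAt (fun t : ℝ => v + t • A v) (A v) t := by
    simpa using ((hasDerivAt_id t).smul_const (A v)).const_add v
  have hq := (hline.norm_sq.const_add 1).rpow_const (p := -b)
    (Or.inl (by positivity : (1 + ‖v + t • A v‖ ^ 2 : ℝ) ≠ 0))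
  exact hq.congr_deriv (by ring)

variable [FiniteDimensional ℝ E] [MeasurableSpace E] [BorelSpace E] (μ : Measure E)
  [μ.IsAddHaarMeasure]

theorem integrable_cauchyWeight (p : E) {a b : ℝ} (ha : 0 ≤ a) (hb : finrank ℝ E + 2 * a < 2 * b) :
    Integrable (cauchyWeight p a b) μ := by
  have h := (integrable_rpow_neg_one_add_norm_sq (E := E) (μ := μ) (r := 2 * (b - a))
    (by linarith)).const_mul ((‖p‖ ^ 2) ^ a)
  refine h.mono' (continuous_cauchyWeight p ha b).aestronglyMeasurable
    (Eventually.of_forall fun v => ?_)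
  rw [Real.norm_of_nonneg (cauchyWeight_nonneg p a b v),
    show -(2 * (b - a)) / 2 = a - b by ring]
  exact cauchyWeight_le p ha b v

theorem hasDerivAt_integral_cauchyWeight_dilation (p : E) {a b : ℝ} (ha : 0 ≤ a)
    (hb : finrank ℝ E + 2 * a < 2 * b) :
    HasDerivAt (fun t : ℝ => ∫ v, (⟪p, v⟫ ^ 2) ^ a * (1 + ‖v + t • A v‖ ^ 2) ^ (-b) ∂μ)
      (-(2 * b * ∫ v, ⟪v, A v⟫ * cauchyWeight p a (b + 1) v ∂μ)) 0 := by
  have hb0 : 0 ≤ b := by linarith [(finrank ℝ E).cast_nonneg (α := ℝ)]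
  have hr : 0 < 1 / (2 * (‖A‖ + 1)) := by positivity
  have hcont (c t : ℝ) : Continuous fun v => (1 + ‖v + t • A v‖ ^ 2) ^ c :=
    Continuous.rpow_const (by fun_prop) fun v => Or.inl (by positivity)
  have hcontp : Continuous fun v => (⟪p, v⟫ ^ 2) ^ a :=
    Continuous.rpow_const (by fun_prop) fun _ => Or.inr ha
  have hderiv := (hasDerivAt_integral_of_dominated_loc_of_deriv_le (μ := μ)
    (F := fun t v => (⟪p, v⟫ ^ 2) ^ a * (1 + ‖v + t • A v‖ ^ 2) ^ (-b))
    (F' := fun t v => (⟪p, v⟫ ^ 2) ^ a *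
      -(2 * ⟪v + t • A v, A v⟫ * (b * (1 + ‖v + t • A v‖ ^ 2) ^ (-b - 1))))
    (bound := fun v => 4 * ‖A‖ * b * 4 ^ b * cauchyWeight p a b v)
    (Metric.ball_mem_nhds (0 : ℝ) hr)
    (Eventually.of_forall fun t => (hcontp.mul (hcont (-b) t)).aestronglyMeasurable)
    (by simpa only [zero_smul, add_zero] using! integrable_cauchyWeight μ p ha hb)
    (hcontp.mul (by have := hcont (-b - 1) 0; fun_prop)).aestronglyMeasurable
    (Eventually.of_forall fun v t ht => ?_)
    ((integrable_cauchyWeight μ p ha hb).const_mul _)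
    (Eventually.of_forall fun v t _ => (hasDerivAt_rpow_one_add_norm_sq A b v t).const_mul _)).2
  · refine hderiv.congr_deriv ?_
    rw [← integral_const_mul, ← integral_neg]
    refine integral_congr_ae (Eventually.of_forall fun v => ?_)
    simp only [cauchyWeight, zero_smul, add_zero]
    ring_nf
  · have ht' : |t| * (2 * (‖A‖ + 1)) ≤ 1 := by
      rw [mem_ball_zero_iff, Real.norm_eq_abs, lt_div_iff₀ (by positivity)] at ht
      exact ht.le
    have hbound := abs_two_mul_inner_mul_rpow_le A hb0 (norm_le_two_mul_norm_add_smul A ht' v)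
    rw [norm_mul, norm_neg, Real.norm_eq_abs, Real.norm_eq_abs,
      abs_of_nonneg (by positivity : 0 ≤ (⟪p, v⟫ ^ 2) ^ a), cauchyWeight,
      mul_left_comm (4 * ‖A‖ * b * 4 ^ b)]
    exact mul_le_mul_of_nonneg_left hbound (by positivity)

theorem abs_det_mul_rpow_mul_integral_cauchyWeight_dilation {p : E}
    (hA : ∀ v, ⟪p, A v⟫ = ⟪p, v⟫) (a b : ℝ) {t : ℝ} (ht : 0 ≤ 1 + t)
    (hdet : LinearMap.det (LinearMap.id + t • (A : E →ₗ[ℝ] E)) ≠ 0) :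
    |LinearMap.det (LinearMap.id + t • (A : E →ₗ[ℝ] E))| * (1 + t) ^ (2 * a) *
        ∫ v, (⟪p, v⟫ ^ 2) ^ a * (1 + ‖v + t • A v‖ ^ 2) ^ (-b) ∂μ =
      ∫ v, cauchyWeight p a b v ∂μ := by
  rw [integral_eq_abs_det_smul_integral_comp μ hdet (cauchyWeight p a b), smul_eq_mul, mul_assoc,
    ← integral_const_mul]
  refine congrArg (_ * ·) (integral_congr_ae (Eventually.of_forall fun v => ?_))
  have hpv : ⟪p, v + t • A v⟫ = (1 + t) * ⟪p, v⟫ := by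
    rw [inner_add_right, inner_smul_right, hA]
    ring
  simp only [cauchyWeight, LinearMap.add_apply, LinearMap.id_apply, LinearMap.smul_apply,
    ContinuousLinearMap.coe_coe]
  rw [hpv, mul_pow, Real.mul_rpow (by positivity) (by positivity), ← Real.rpow_natCast (1 + t),
    ← Real.rpow_mul ht, mul_assoc]
  norm_cast

/-- The derivative at `t = 0` of the invariance of the integral under `v ↦ v + t A v`. -/
theorem integral_inner_apply_mul_cauchyWeight_add_one {p : E} (hA : ∀ v, ⟪p, A v⟫ = ⟪p, v⟫)
    {a b : ℝ} (ha : 0 ≤ a) (hb : finrank ℝ E + 2 * a < 2 * b) :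
    2 * b * ∫ v, ⟪v, A v⟫ * cauchyWeight p a (b + 1) v ∂μ =
      (LinearMap.trace ℝ E A + 2 * a) * ∫ v, cauchyWeight p a b v ∂μ := by
  set I : ℝ → ℝ := fun t => ∫ v, (⟪p, v⟫ ^ 2) ^ a * (1 + ‖v + t • A v‖ ^ 2) ^ (-b) ∂μ
  set d : ℝ → ℝ := fun t => LinearMap.det (LinearMap.id + t • (A : E →ₗ[ℝ] E))
  have hI : I 0 = ∫ v, cauchyWeight p a b v ∂μ := by simp [I, cauchyWeight]
  have hd0 : d 0 = 1 := by simp [d]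
  have hd : HasDerivAt d (LinearMap.trace ℝ E A) 0 := hasDerivAt_det_id_add_smul (A : E →ₗ[ℝ] E)
  have hpow : HasDerivAt (fun t : ℝ => (1 + t) ^ (2 * a)) (2 * a) 0 := by
    simpa using ((hasDerivAt_id (0 : ℝ)).const_add 1).rpow_const (p := 2 * a)
      (Or.inl (by simp))
  have hconst : (fun t => d t * (1 + t) ^ (2 * a) * I t) =ᶠ[𝓝 0]
      fun _ => ∫ v, cauchyWeight p a b v ∂μ := by
    filter_upwards [hd.continuousAt.eventually_const_lt (hd0 ▸ zero_lt_one),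
      eventually_gt_nhds (neg_one_lt_zero : (-1 : ℝ) < 0)] with t hdt ht
    rw [← abs_det_mul_rpow_mul_integral_cauchyWeight_dilation A μ hA a b (by linarith) hdt.ne',
      abs_of_pos hdt]
  have hderiv := ((hd.mul hpow).mul (hasDerivAt_integral_cauchyWeight_dilation A μ p ha hb)).unique
    ((hasDerivAt_const (0 : ℝ) (∫ v, cauchyWeight p a b v ∂μ)).congr_of_eventuallyEq hconst)
  simp only [Pi.mul_apply, hd0, add_zero, Real.one_rpow, mul_one, one_mul] at hderiv
  rw [← hI]
  linarith

theorem integral_inner_apply_mul_cauchyWeight {p : E} (hA : ∀ v, ⟪p, A v⟫ = ⟪p, v⟫) {a b : ℝ}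
    (ha : 0 ≤ a) (hb : finrank ℝ E + 2 * a + 2 < 2 * b) :
    (2 * b - 2 - finrank ℝ E - 2 * a) * ∫ v, ⟪v, A v⟫ * cauchyWeight p a b v ∂μ =
      (LinearMap.trace ℝ E A + 2 * a) * ∫ v, cauchyWeight p a b v ∂μ := by
  have hb' : finrank ℝ E + 2 * a < 2 * (b - 1) := by linarith
  have htrace := integral_inner_apply_mul_cauchyWeight_add_one A μ hA ha hb'
  have hid := integral_inner_apply_mul_cauchyWeight_add_one (ContinuousLinearMap.id ℝ E) μ
    (fun v => rfl : ∀ v, ⟪p, ContinuousLinearMap.id ℝ E v⟫ = ⟪p, v⟫) ha hb'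
  have hnorm : ∫ v, ⟪v, v⟫ * cauchyWeight p a b v ∂μ =
      ∫ v, cauchyWeight p a (b - 1) v ∂μ - ∫ v, cauchyWeight p a b v ∂μ := by
    rw [← integral_sub (integrable_cauchyWeight μ p ha hb')
      (integrable_cauchyWeight μ p ha (by linarith))]
    refine integral_congr_ae (Eventually.of_forall fun v => ?_)
    simp only [real_inner_self_eq_norm_sq, ← one_add_norm_sq_mul_cauchyWeight p a b v]
    ring
  simp only [ContinuousLinearMap.coe_id, LinearMap.trace_id, ContinuousLinearMap.id_apply,
    sub_add_cancel] at htrace hid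
  rw [hnorm] at hid
  have hb1 : 2 * (b - 1) ≠ 0 := by linarith [(finrank ℝ E).cast_nonneg (α := ℝ)]
  refine mul_left_cancel₀ hb1 ?_
  linear_combination (2 * b - 2 - finrank ℝ E - 2 * a) * htrace +
    (LinearMap.trace ℝ E A + 2 * a) * hid

end CauchyWeight

section RankOneUpdate

open scoped RealInnerProductSpace

variable {n : Type*} [Fintype n] [DecidableEq n]

theorem integral_eq_abs_det_smul_integral_euclidean {F : Type*} [NormedAddCommGroup F]
    [NormedSpace ℝ F] {B : Matrix n n ℝ} (hB : B.det ≠ 0) (f : (n → ℝ) → F) :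
    ∫ v, f v = |B.det| • ∫ u : EuclideanSpace ℝ n, f (B *ᵥ u.ofLp) := by
  rw [integral_eq_abs_det_smul_integral_comp volume (L := toLin' B) (by rwa [LinearMap.det_toLin']),
    LinearMap.det_toLin',
    ← (PiLp.volume_preserving_ofLp n).integral_comp
      (MeasurableEquiv.toLp 2 (n → ℝ)).symm.measurableEmbedding]
  simp only [toLin'_apply]

theorem integrable_of_integrable_euclidean {F : Type*} [NormedAddCommGroup F]
    {B : Matrix n n ℝ} (hB : B.det ≠ 0) {f : (n → ℝ) → F}
    (hf : Integrable fun u : EuclideanSpace ℝ n => f (B *ᵥ u.ofLp)) : Integrable f :=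
  integrable_of_integrable_comp_linearMap volume (L := toLin' B) (by rwa [LinearMap.det_toLin'])
    (((PiLp.volume_preserving_ofLp n).integrable_comp_emb
      (MeasurableEquiv.toLp 2 (n → ℝ)).symm.measurableEmbedding).1 hf)

theorem det_transpose_mul_self_add_vecMulVec (B : Matrix n n ℝ) (u : n → ℝ) :
    (Bᵀ * B + vecMulVec (Bᵀ *ᵥ u) (Bᵀ *ᵥ u)).det = B.det ^ 2 * (1 + u ⬝ᵥ u) := by
  have hfactor : Bᵀ * B + vecMulVec (Bᵀ *ᵥ u) (Bᵀ *ᵥ u) =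
      Bᵀ * (1 + replicateCol Unit u * replicateRow Unit u) * B := by
    rw [mul_add, add_mul, mul_one, ← vecMulVec_eq, mul_vecMulVec, vecMulVec_mul, mulVec_transpose]
  rw [hfactor, det_mul, det_mul, det_one_add_replicateCol_mul_replicateRow, det_transpose]
  ring

theorem exists_eq_transpose_mul_self {M : Matrix n n ℝ} (hM : M.PosDef) :
    ∃ B : Matrix n n ℝ, B.det ≠ 0 ∧ M = Bᵀ * B := by
  obtain ⟨B, rfl⟩ := exists_eq_conjTranspose_mul_self hM.posSemidef
  exact ⟨B, fun h => hM.det_pos.ne' (by rw [det_mul, h, mul_zero]), rfl⟩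

/-- The weight `(x ⬝ v) ^ (2 a) * det (M + v vᵀ) ^ (-b)`. Seen as a function of the first row `v` of
a square matrix whose other rows are `H`, this is the density of the spherical ensemble, with
`M = I + Hᵀ H` and `x` the vector of signed maximal minors of `H`. -/
noncomputable def rankOneWeight (x : n → ℝ) (M : Matrix n n ℝ) (a b : ℝ) (v : n → ℝ) : ℝ :=
  ((x ⬝ᵥ v) ^ 2) ^ a * (M + vecMulVec v v).det ^ (-b)

theorem rankOneWeight_transpose_mulVec (B : Matrix n n ℝ) (x : n → ℝ) (a b : ℝ)
    (u : EuclideanSpace ℝ n) :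
    rankOneWeight x (Bᵀ * B) a b (Bᵀ *ᵥ u.ofLp) =
      (B.det ^ 2) ^ (-b) * cauchyWeight (WithLp.toLp 2 (B *ᵥ x)) a b u := by
  have hu : u.ofLp ⬝ᵥ u.ofLp = ‖u‖ ^ 2 := by
    rw [EuclideanSpace.real_norm_sq_eq]
    exact Finset.sum_congr rfl fun i _ => (sq _).symm
  have hx : x ⬝ᵥ Bᵀ *ᵥ u.ofLp = ⟪WithLp.toLp 2 (B *ᵥ x), u⟫ := by
    rw [mulVec_transpose, dotProduct_comm, ← dotProduct_mulVec]
    rfl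
  rw [rankOneWeight, cauchyWeight, det_transpose_mul_self_add_vecMulVec, hu, hx,
    Real.mul_rpow (sq_nonneg _) (by positivity)]
  ring

theorem integrable_rankOneWeight (x : n → ℝ) {M : Matrix n n ℝ} (hM : M.PosDef) {a b : ℝ}
    (ha : 0 ≤ a) (hb : Fintype.card n + 2 * a < 2 * b) :
    Integrable (rankOneWeight x M a b) := by
  obtain ⟨B, hB, rfl⟩ := exists_eq_transpose_mul_self hM
  refine integrable_of_integrable_euclidean (B := Bᵀ) (by rwa [det_transpose]) ?_
  simp only [rankOneWeight_transpose_mulVec]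
  exact (integrable_cauchyWeight volume _ ha (by rwa [finrank_euclideanSpace])).const_mul _

theorem integral_rankOneWeight_zero {M : Matrix n n ℝ} (hM : M.PosDef) (s : ℝ) :
    ∫ v, rankOneWeight 0 M 0 s v =
      M.det ^ (1 / 2 - s) * ∫ u : EuclideanSpace ℝ n, cauchyWeight 0 0 s u := by
  obtain ⟨B, hB, rfl⟩ := exists_eq_transpose_mul_self hM
  have hdet : (Bᵀ * B).det = B.det ^ 2 := by rw [det_mul, det_transpose, sq]
  rw [integral_eq_abs_det_smul_integral_euclidean (B := Bᵀ) (by rwa [det_transpose]), det_transpose]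
  simp only [rankOneWeight_transpose_mulVec, mulVec_zero, WithLp.toLp_zero, integral_const_mul,
    smul_eq_mul]
  rw [hdet, ← mul_assoc, ← Real.sqrt_sq_eq_abs, Real.sqrt_eq_rpow,
    ← Real.rpow_add (by positivity), sub_eq_add_neg]

theorem integral_dotProduct_self_mul_rankOneWeight {x : n → ℝ} {M : Matrix n n ℝ} (hM : M.PosDef)
    (hx : M *ᵥ x = x) {a b : ℝ} (ha : 0 ≤ a) (hb : Fintype.card n + 2 * a + 2 < 2 * b) :
    (2 * b - 2 - Fintype.card n - 2 * a) * ∫ v, (v ⬝ᵥ v) * rankOneWeight x M a b v =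
      (M.trace + 2 * a) * ∫ v, rankOneWeight x M a b v := by
  obtain ⟨B, hB, rfl⟩ := exists_eq_transpose_mul_self hM
  set A : EuclideanSpace ℝ n →L[ℝ] EuclideanSpace ℝ n := toEuclideanCLM (𝕜 := ℝ) (B * Bᵀ)
  have htrace : LinearMap.trace ℝ _ (A : EuclideanSpace ℝ n →ₗ[ℝ] EuclideanSpace ℝ n) =
      (Bᵀ * B).trace := by
    rw [trace_mul_comm]
    exact trace_toLin_eq _ _
  have hinner (u : EuclideanSpace ℝ n) :
      (Bᵀ *ᵥ u.ofLp) ⬝ᵥ (Bᵀ *ᵥ u.ofLp) = ⟪u, A u⟫ := by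
    rw [EuclideanSpace.inner_eq_star_dotProduct, star_trivial, ofLp_toEuclideanCLM,
      ← mulVec_mulVec, dotProduct_comm, dotProduct_mulVec, vecMul_transpose]
  have hA (u : EuclideanSpace ℝ n) :
      ⟪WithLp.toLp 2 (B *ᵥ x), A u⟫ = ⟪WithLp.toLp 2 (B *ᵥ x), u⟫ := by
    have hBx : Bᵀ *ᵥ (B *ᵥ x) = x := by rw [mulVec_mulVec, hx]
    rw [EuclideanSpace.inner_eq_star_dotProduct, EuclideanSpace.inner_eq_star_dotProduct,
      star_trivial, ofLp_toEuclideanCLM, ← mulVec_mulVec, dotProduct_comm, dotProduct_mulVec,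
      ← mulVec_transpose, hBx, dotProduct_mulVec, vecMul_transpose, dotProduct_comm]
  have hmoment := integral_inner_apply_mul_cauchyWeight A volume hA ha
    (by rwa [finrank_euclideanSpace])
  rw [htrace, finrank_euclideanSpace] at hmoment
  have hBt : Bᵀ.det ≠ 0 := by rwa [det_transpose]
  rw [integral_eq_abs_det_smul_integral_euclidean hBt,
    integral_eq_abs_det_smul_integral_euclidean hBt]
  simp only [rankOneWeight_transpose_mulVec, hinner, mul_left_comm _ ((B.det ^ 2) ^ (-b)),
    integral_const_mul, smul_eq_mul]
  linear_combination |Bᵀ.det| * (B.det ^ 2) ^ (-b) * hmoment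

end RankOneUpdate

section FirstRow

theorem measurableEmbedding_finCons {m : ℕ} {X : Type*} [MeasurableSpace X] :
    MeasurableEmbedding fun p : X × (Fin m → X) => (Fin.cons p.1 p.2 : Fin (m + 1) → X) := by
  convert! (MeasurableEquiv.piFinSuccAbove (fun _ : Fin (m + 1) => X) 0).symm.measurableEmbedding
    using 2 with p
  exact (Fin.insertNth_zero' p.1 p.2).symm

theorem measurePreserving_finCons {m : ℕ} {X : Type*} [MeasureSpace X]
    [SigmaFinite (volume : Measure X)] :
    MeasurePreserving fun p : X × (Fin m → X) => (Fin.cons p.1 p.2 : Fin (m + 1) → X) := by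
  convert! (volume_preserving_piFinSuccAbove (fun _ : Fin (m + 1) => X) 0).symm using 2 with p
  exact (Fin.insertNth_zero' p.1 p.2).symm

theorem gram_cons {R n : Type*} [CommSemiring R] {m : ℕ} (v : n → R) (h : Fin m → n → R) :
    (of (Fin.cons v h : Fin (m + 1) → n → R))ᵀ * of (Fin.cons v h : Fin (m + 1) → n → R) =
      (of h)ᵀ * of h + vecMulVec v v := by
  ext i j
  simp [mul_apply, Fin.sum_univ_succ, vecMulVec_apply, add_comm]

variable {n : Type*} [Fintype n] [DecidableEq n]

theorem gramDet_cons {m : ℕ} (v : n → ℝ) (h : Fin m → n → ℝ) :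
    gramDet (Fin.cons v h : Fin (m + 1) → n → ℝ) =
      (1 + (of h)ᵀ * of h + vecMulVec v v).det := by
  rw [gramDet, gram_cons, add_assoc]

theorem gramDet_cons_rpow_neg {m : ℕ} (v : n → ℝ) (h : Fin m → n → ℝ) (s : ℝ) :
    gramDet (Fin.cons v h : Fin (m + 1) → n → ℝ) ^ (-s) =
      rankOneWeight 0 (1 + (of h)ᵀ * of h) 0 s v := by
  rw [gramDet_cons, rankOneWeight, Real.rpow_zero, one_mul]

/-- Integrating out one row of `g` lowers the exponent `s` by `1 / 2`. -/
theorem integrable_gramDet_rpow_neg {m : ℕ} {s : ℝ} (hs : Fintype.card n + m - 1 < 2 * s) :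
    Integrable fun g : Fin m → n → ℝ => gramDet g ^ (-s) := by
  induction m generalizing s with
  | zero =>
    have : IsFiniteMeasure (volume : Measure (Fin 0 → n → ℝ)) := by
      rw [volume_pi, Measure.pi_of_empty]
      infer_instance
    exact Integrable.of_finite
  | succ m ih =>
    push_cast at hs
    have hmeas : AEStronglyMeasurable
        fun p : (n → ℝ) × (Fin m → n → ℝ) =>
          gramDet (Fin.cons p.1 p.2 : Fin (m + 1) → n → ℝ) ^ (-s) :=
      ((continuous_gramDet.measurable.pow_const _).comp
        measurableEmbedding_finCons.measurable).aestronglyMeasurable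
    rw [← measurePreserving_finCons.integrable_comp_emb measurableEmbedding_finCons]
    refine (integrable_prod_iff' hmeas).2 ⟨.of_forall fun h => ?_, ?_⟩
    · simp only [gramDet_cons_rpow_neg]
      exact integrable_rankOneWeight 0 (posDef_one_add_gram h) le_rfl
        (by linarith [m.cast_nonneg (α := ℝ)])
    · have hnorm (v : n → ℝ) (h : Fin m → n → ℝ) :
          ‖gramDet (Fin.cons v h : Fin (m + 1) → n → ℝ) ^ (-s)‖ =
            rankOneWeight 0 (1 + (of h)ᵀ * of h) 0 s v := by
        rw [Real.norm_of_nonneg (Real.rpow_nonneg (gramDet_pos _).le _), gramDet_cons_rpow_neg]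
      simp only [hnorm, integral_rankOneWeight_zero (posDef_one_add_gram _)]
      rw [← neg_sub]
      exact (ih (by linarith)).mul_const _

theorem integrable_of_norm_le_gramDet_rpow {m : ℕ} {F : Type*} [NormedAddCommGroup F]
    {f : (Fin m → n → ℝ) → F} {C s : ℝ} (hs : Fintype.card n + m - 1 < 2 * s)
    (hf : AEStronglyMeasurable f) (hle : ∀ g, ‖f g‖ ≤ C * gramDet g ^ (-s)) : Integrable f :=
  ((integrable_gramDet_rpow_neg hs).const_mul C).mono' hf (.of_forall hle)

end FirstRow

section SphericalWeight

variable {N : ℕ} {a b : ℝ}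

theorem det_gram_eq_sq (g : Fin N → Fin N → ℝ) : ((of g)ᵀ * of g).det = (of g).det ^ 2 := by
  rw [det_mul, det_transpose, sq]

theorem sphericalRealWeight_nonneg (a b : ℝ) (g : Fin N → Fin N → ℝ) :
    0 ≤ sphericalRealWeight N a b g :=
  mul_nonneg (Real.rpow_nonneg (posSemidef_transpose_mul_self g).det_nonneg _)
    (Real.rpow_nonneg (gramDet_pos g).le _)

theorem continuous_sphericalRealWeight (ha : 0 ≤ a) (b : ℝ) :
    Continuous (sphericalRealWeight N a b) := by
  have hgram : Continuous fun g : Fin N → Fin N → ℝ => (of g)ᵀ * of g :=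
    have : Continuous fun g : Fin N → Fin N → ℝ => of g := continuous_id
    by fun_prop
  exact (hgram.matrix_det.rpow_const fun _ => Or.inr ha).mul
    (continuous_gramDet.rpow_const fun g => Or.inl (gramDet_pos g).ne')

theorem sphericalRealWeight_le_gramDet_rpow (ha : 0 ≤ a) (b : ℝ) (g : Fin N → Fin N → ℝ) :
    sphericalRealWeight N a b g ≤ gramDet g ^ (a - b) := by
  rw [sub_eq_add_neg, Real.rpow_add (gramDet_pos g)]
  exact mul_le_mul_of_nonneg_right
    (Real.rpow_le_rpow (posSemidef_transpose_mul_self g).det_nonneg (det_gram_le_gramDet g) ha)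
    (Real.rpow_nonneg (gramDet_pos g).le _)

theorem integrable_sphericalRealWeight_smul {F : Type*} [NormedAddCommGroup F] [NormedSpace ℝ F]
    (ha : 0 ≤ a) (hb : a + N + 1 / 2 < b) {f : (Fin N → Fin N → ℝ) → F} (hf : Continuous f) {K : ℝ}
    (hK : ∀ g, ‖f g‖ ≤ K * gramDet g) : Integrable fun g => sphericalRealWeight N a b g • f g := by
  refine integrable_of_norm_le_gramDet_rpow (s := b - a - 1) (C := K)
    (by rw [Fintype.card_fin]; linarith)
    ((continuous_sphericalRealWeight ha b).smul hf).aestronglyMeasurable fun g => ?_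
  calc ‖sphericalRealWeight N a b g • f g‖
      = sphericalRealWeight N a b g * ‖f g‖ := by
        rw [norm_smul, Real.norm_of_nonneg (sphericalRealWeight_nonneg a b g)]
    _ ≤ gramDet g ^ (a - b) * (K * gramDet g) :=
        mul_le_mul (sphericalRealWeight_le_gramDet_rpow ha b g) (hK g) (norm_nonneg _)
          (Real.rpow_nonneg (gramDet_pos g).le _)
    _ = K * gramDet g ^ (-(b - a - 1)) := by
        rw [show -(b - a - 1) = a - b + 1 by ring, Real.rpow_add_one (gramDet_pos g).ne']
        ring

theorem integrable_sphericalRealWeight (ha : 0 ≤ a) (hb : a + N + 1 / 2 < b) :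
    Integrable (sphericalRealWeight N a b) := by
  simpa only [smul_eq_mul, mul_one] using
    integrable_sphericalRealWeight_smul ha hb (f := fun _ => (1 : ℝ)) continuous_const (K := 1)
      fun g => by simpa using one_le_gramDet g

theorem integral_sphericalRealWeight_pos (ha : 0 ≤ a) (hb : a + N + 1 / 2 < b) :
    0 < ∫ g, sphericalRealWeight N a b g := by
  rw [integral_pos_iff_support_of_nonneg (sphericalRealWeight_nonneg a b)
    (integrable_sphericalRealWeight ha hb)]
  refine (continuous_sphericalRealWeight ha b).isOpen_support.measure_pos volume
    ⟨of.symm 1, (mul_pos (Real.rpow_pos_of_pos ?_ _) (Real.rpow_pos_of_pos (gramDet_pos _) _)).ne'⟩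
  rw [det_gram_eq_sq, Equiv.apply_symm_apply, det_one]
  positivity

theorem integrable_sphericalRealWeight_mul_sq (ha : 0 ≤ a) (hb : a + N + 1 / 2 < b) (i j : Fin N) :
    Integrable fun g => sphericalRealWeight N a b g * g i j ^ 2 :=
  integrable_sphericalRealWeight_smul ha hb (f := fun g => g i j ^ 2) (by fun_prop) (K := 1)
    fun g => by
      rw [one_mul, Real.norm_of_nonneg (sq_nonneg _)]
      exact sq_le_gramDet g i j

theorem integrable_sphericalRealWeight_mul_dotProduct_self (ha : 0 ≤ a) (hb : a + N + 1 / 2 < b)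
    (i : Fin N) : Integrable fun g => sphericalRealWeight N a b g * (g i ⬝ᵥ g i) := by
  simp only [dotProduct, ← sq, Finset.mul_sum]
  exact integrable_finsetSum _ fun j _ => integrable_sphericalRealWeight_mul_sq ha hb i j

theorem sphericalRealWeight_congr (a b : ℝ) {g h : Fin N → Fin N → ℝ}
    (hgram : (of g)ᵀ * of g = (of h)ᵀ * of h) :
    sphericalRealWeight N a b g = sphericalRealWeight N a b h := by
  rw [sphericalRealWeight, sphericalRealWeight, hgram]

end SphericalWeight

section SecondMoment

/-- The signed maximal minors of an `m × (m + 1)` matrix: the generalized cross product of its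
rows. -/
def signedMaximalMinors {R : Type*} [CommRing R] {m : ℕ} (h : Fin m → Fin (m + 1) → R) :
    Fin (m + 1) → R :=
  fun j => (-1) ^ (j : ℕ) * ((of h).submatrix id j.succAbove).det

theorem signedMaximalMinors_dotProduct {R : Type*} [CommRing R] {m : ℕ}
    (h : Fin m → Fin (m + 1) → R) (v : Fin (m + 1) → R) :
    signedMaximalMinors h ⬝ᵥ v = (of (Fin.cons v h : Fin (m + 1) → Fin (m + 1) → R)).det := by
  rw [det_succ_row_zero]
  exact Finset.sum_congr rfl fun j _ => mul_right_comm _ _ _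

theorem mulVec_signedMaximalMinors {R : Type*} [CommRing R] {m : ℕ}
    (h : Fin m → Fin (m + 1) → R) : of h *ᵥ signedMaximalMinors h = 0 := by
  funext k
  calc (of h *ᵥ signedMaximalMinors h) k
      = signedMaximalMinors h ⬝ᵥ h k := dotProduct_comm _ _
    _ = (of (Fin.cons (h k) h : Fin (m + 1) → Fin (m + 1) → R)).det :=
        signedMaximalMinors_dotProduct h (h k)
    _ = 0 := det_zero_of_row_eq (Fin.succ_ne_zero k).symm rfl

theorem integral_eq_integral_integral_finCons {m : ℕ} {X F : Type*} [MeasureSpace X]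
    [SigmaFinite (volume : Measure X)] [NormedAddCommGroup F] [NormedSpace ℝ F]
    {f : (Fin (m + 1) → X) → F} (hf : Integrable f) :
    ∫ g, f g = ∫ h : Fin m → X, ∫ v : X, f (Fin.cons v h) := by
  rw [← measurePreserving_finCons.integral_comp measurableEmbedding_finCons]
  exact integral_prod_symm _
    ((measurePreserving_finCons.integrable_comp_emb measurableEmbedding_finCons).2 hf)

variable {a b : ℝ}

theorem sphericalRealWeight_cons {m : ℕ} (a b : ℝ) (v : Fin (m + 1) → ℝ)
    (h : Fin m → Fin (m + 1) → ℝ) :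
    sphericalRealWeight (m + 1) a b (Fin.cons v h) =
      rankOneWeight (signedMaximalMinors h) (1 + (of h)ᵀ * of h) a b v := by
  rw [sphericalRealWeight, det_gram_eq_sq, gram_cons, ← add_assoc, rankOneWeight,
    signedMaximalMinors_dotProduct]

theorem integral_dotProduct_self_mul_sphericalRealWeight_cons {m : ℕ} (ha : 0 ≤ a)
    (hb : (m + 1 : ℕ) + 2 * a + 2 < 2 * b) (h : Fin m → Fin (m + 1) → ℝ) :
    (2 * b - 2 - (m + 1 : ℕ) - 2 * a) *
        ∫ v : Fin (m + 1) → ℝ, (v ⬝ᵥ v) * sphericalRealWeight (m + 1) a b (Fin.cons v h) =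
      ((m + 1 : ℕ) + ∑ k, h k ⬝ᵥ h k + 2 * a) *
        ∫ v : Fin (m + 1) → ℝ, sphericalRealWeight (m + 1) a b (Fin.cons v h) := by
  have hfix : (1 + (of h)ᵀ * of h) *ᵥ signedMaximalMinors h = signedMaximalMinors h := by
    rw [add_mulVec, one_mulVec, ← mulVec_mulVec, mulVec_signedMaximalMinors, mulVec_zero, add_zero]
  have hmoment := integral_dotProduct_self_mul_rankOneWeight (posDef_one_add_gram h) hfix ha
    (by rwa [Fintype.card_fin])
  rw [trace_add, trace_one, trace_gram, Fintype.card_fin] at hmoment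
  simpa only [sphericalRealWeight_cons] using hmoment

theorem integral_sphericalRealWeight_mul_dotProduct_zero {m : ℕ} (ha : 0 ≤ a)
    (hb : a + (m + 1 : ℕ) + 1 / 2 < b) :
    (2 * b - 2 - (m + 1 : ℕ) - 2 * a) *
        ∫ g, sphericalRealWeight (m + 1) a b g * (g 0 ⬝ᵥ g 0) =
      ((m + 1 : ℕ) + 2 * a) * (∫ g, sphericalRealWeight (m + 1) a b g) +
        ∑ k : Fin m, ∫ g, sphericalRealWeight (m + 1) a b g * (g k.succ ⬝ᵥ g k.succ) := by
  have hb' : (m + 1 : ℕ) + 2 * a + 2 < 2 * b := by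
    push_cast at hb ⊢
    linarith [m.cast_nonneg (α := ℝ)]
  have hw := integrable_sphericalRealWeight ha hb
  have hrow := integrable_sphericalRealWeight_mul_dotProduct_self ha hb
  have hrows := integrable_finsetSum Finset.univ fun (k : Fin m) _ => hrow k.succ
  have hsum : Integrable fun g => ((m + 1 : ℕ) + 2 * a) * sphericalRealWeight (m + 1) a b g +
      ∑ k : Fin m, sphericalRealWeight (m + 1) a b g * (g k.succ ⬝ᵥ g k.succ) :=
    (hw.const_mul _).add hrows
  rw [← integral_finsetSum _ fun (k : Fin m) _ => hrow k.succ, ← integral_const_mul,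
    ← integral_const_mul, ← integral_add (hw.const_mul _) hrows,
    integral_eq_integral_integral_finCons ((hrow 0).const_mul _),
    integral_eq_integral_integral_finCons hsum]
  refine integral_congr_ae (.of_forall fun h => ?_)
  simp only [Fin.cons_zero, Fin.cons_succ, mul_comm (sphericalRealWeight _ _ _ _), ← Finset.sum_mul,
    ← add_mul, integral_const_mul]
  rw [integral_dotProduct_self_mul_sphericalRealWeight_cons ha hb', add_right_comm]

end SecondMoment

section Symmetries

variable {N : ℕ} {a b : ℝ} {F : Type*} [NormedAddCommGroup F] [NormedSpace ℝ F]
  {T : (Fin N → Fin N → ℝ) ≃ᵐ (Fin N → Fin N → ℝ)}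

theorem integral_sphericalRealWeight_smul_comp (a b : ℝ)
    (hT : MeasurePreserving T) (hgram : ∀ g, (of (T g))ᵀ * of (T g) = (of g)ᵀ * of g)
    (f : (Fin N → Fin N → ℝ) → F) :
    ∫ g, sphericalRealWeight N a b g • f (T g) = ∫ g, sphericalRealWeight N a b g • f g := by
  rw [← hT.integral_comp' fun g => sphericalRealWeight N a b g • f g]
  simp only [sphericalRealWeight_congr a b (hgram _)]

theorem integrable_sphericalRealWeight_smul_comp (hT : MeasurePreserving T)
    (hgram : ∀ g, (of (T g))ᵀ * of (T g) = (of g)ᵀ * of g) {f : (Fin N → Fin N → ℝ) → F}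
    (hf : Integrable fun g => sphericalRealWeight N a b g • f g) :
    Integrable fun g => sphericalRealWeight N a b g • f (T g) := by
  simpa only [Function.comp_def, sphericalRealWeight_congr a b (hgram _)] using
    (hT.integrable_comp_emb T.measurableEmbedding).2 hf

theorem gram_comp_perm {R m n : Type*} [Fintype m] [CommSemiring R] (σ : Equiv.Perm m)
    (g : m → n → R) : (of (g ∘ σ))ᵀ * of (g ∘ σ) = (of g)ᵀ * of g := by
  ext i j
  exact Equiv.sum_comp σ fun k => g k i * g k j

theorem integral_sphericalRealWeight_smul_comp_perm (a b : ℝ)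
    (σ : Equiv.Perm (Fin N)) (f : (Fin N → Fin N → ℝ) → F) :
    ∫ g, sphericalRealWeight N a b g • f (g ∘ σ) = ∫ g, sphericalRealWeight N a b g • f g :=
  integral_sphericalRealWeight_smul_comp (T := .arrowCongr' σ.symm (.refl _)) a b
    (volume_preserving_arrowCongr' _ _ (.id _)) (gram_comp_perm σ) f

theorem integral_sphericalRealWeight_mul_apply_row (a b : ℝ) (φ : (Fin N → ℝ) → ℝ) (i k : Fin N) :
    ∫ g, sphericalRealWeight N a b g * φ (g i) = ∫ g, sphericalRealWeight N a b g * φ (g k) := by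
  simpa only [smul_eq_mul, Function.comp_apply, Equiv.swap_apply_left] using
    (integral_sphericalRealWeight_smul_comp_perm a b (Equiv.swap i k) fun g => φ (g i)).symm

theorem integral_sphericalRealWeight_mul_dotProduct_self (ha : 0 ≤ a) (hb : a + N + 1 / 2 < b)
    (i : Fin N) :
    (2 * b - 2 * a - 2 * N - 1) * ∫ g, sphericalRealWeight N a b g * (g i ⬝ᵥ g i) =
      (N + 2 * a) * ∫ g, sphericalRealWeight N a b g := by
  obtain _ | m := N
  · exact i.elim0
  have hfirst := integral_sphericalRealWeight_mul_dotProduct_zero ha hb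
  have hrow (k : Fin (m + 1)) : ∫ g, sphericalRealWeight (m + 1) a b g * (g k ⬝ᵥ g k) =
      ∫ g, sphericalRealWeight (m + 1) a b g * (g i ⬝ᵥ g i) :=
    integral_sphericalRealWeight_mul_apply_row a b (fun v => v ⬝ᵥ v) k i
  simp only [hrow, Finset.sum_const, Finset.card_univ, Fintype.card_fin, nsmul_eq_mul] at hfirst
  push_cast at hfirst ⊢
  linear_combination hfirst

theorem integral_sphericalRealWeight_mul_sum_diag_sq (ha : 0 ≤ a) (hb : a + N + 1 / 2 < b)
    (i : Fin N) :
    ∫ g, sphericalRealWeight N a b g * ∑ j, g j j ^ 2 =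
      ∫ g, sphericalRealWeight N a b g * (g i ⬝ᵥ g i) := by
  simp only [dotProduct, ← sq, Finset.mul_sum]
  rw [integral_finsetSum _ fun j _ => integrable_sphericalRealWeight_mul_sq ha hb j j,
    integral_finsetSum _ fun j _ => integrable_sphericalRealWeight_mul_sq ha hb i j]
  exact Finset.sum_congr rfl fun j _ =>
    integral_sphericalRealWeight_mul_apply_row a b (fun v => v j ^ 2) j i

/-- The matrix `g` with its rows multiplied by the signs `ε`. -/
def flipRows {m n : Type*} (ε : m → ℤˣ) (g : m → n → ℝ) : m → n → ℝ :=
  fun i => ((ε i : ℤ) : ℝ) • g i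

theorem involutive_flipRows {m n : Type*} (ε : m → ℤˣ) :
    Function.Involutive (flipRows (n := n) ε) := fun g => funext fun i => by
  rw [flipRows, flipRows, smul_smul, ← Int.cast_mul, Int.units_coe_mul_self, Int.cast_one, one_smul]

theorem measurePreserving_flipRows {m n : Type*} [Fintype m] [Fintype n] (ε : m → ℤˣ) :
    MeasurePreserving (flipRows (n := n) ε) := by
  refine volume_preserving_pi fun i => ?_
  rcases Int.units_eq_one_or (ε i) with hi | hi
  · convert! MeasurePreserving.id (volume : Measure (n → ℝ)) using 1
    funext v
    simp [hi]
  · convert! Measure.measurePreserving_neg (volume : Measure (n → ℝ)) using 1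
    funext v
    simp [hi]

theorem gram_flipRows {m n : Type*} [Fintype m] (ε : m → ℤˣ) (g : m → n → ℝ) :
    (of (flipRows ε g))ᵀ * of (flipRows ε g) = (of g)ᵀ * of g := by
  ext i j
  refine Finset.sum_congr rfl fun k _ => ?_
  have hsq : ((ε k : ℤ) : ℝ) * (ε k : ℤ) = 1 := by exact_mod_cast Int.units_coe_mul_self (ε k)
  simp only [transpose_apply, of_apply, flipRows, Pi.smul_apply, smul_eq_mul]
  linear_combination g k i * g k j * hsq

theorem two_pow_smul_integral_sphericalRealWeight_smul {f : (Fin N → Fin N → ℝ) → F}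
    (hf : Integrable fun g => sphericalRealWeight N a b g • f g) :
    (2 : ℝ) ^ N • ∫ g, sphericalRealWeight N a b g • f g =
      ∫ g, sphericalRealWeight N a b g • ∑ ε : Fin N → ℤˣ, f (flipRows ε g) := by
  let T (ε : Fin N → ℤˣ) : (Fin N → Fin N → ℝ) ≃ᵐ (Fin N → Fin N → ℝ) :=
    .ofInvolutive (flipRows ε) (involutive_flipRows ε) (measurePreserving_flipRows ε).measurable
  have hT (ε : Fin N → ℤˣ) : MeasurePreserving (T ε) := measurePreserving_flipRows ε
  have hint (ε : Fin N → ℤˣ) : Integrable fun g => sphericalRealWeight N a b g • f (flipRows ε g) :=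
    integrable_sphericalRealWeight_smul_comp (hT ε) (gram_flipRows ε) hf
  have hflip (ε : Fin N → ℤˣ) : ∫ g, sphericalRealWeight N a b g • f (flipRows ε g) =
      ∫ g, sphericalRealWeight N a b g • f g :=
    integral_sphericalRealWeight_smul_comp a b (hT ε) (gram_flipRows ε) f
  simp only [Finset.smul_sum]
  rw [integral_finsetSum _ fun ε _ => hint ε]
  simp only [hflip, Finset.sum_const, Finset.card_univ, Fintype.card_fun, Fintype.card_units_int,
    Fintype.card_fin]
  rw [← Nat.cast_smul_eq_nsmul ℝ, Nat.cast_pow, Nat.cast_ofNat]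

end Symmetries

section SignAverage

variable {n : Type*} [Fintype n] [DecidableEq n]

theorem sum_prod_mul_det {R ι : Type*} [CommRing R] [Fintype ι] (c : n → ι → R)
    (r : n → ι → n → R) :
    ∑ ε : n → ι, (∏ i, c i (ε i)) * (of fun i => r i (ε i)).det =
      (of fun i => ∑ s, c i s • r i s).det := by
  let D := (detRowAlternating (R := R) (n := n)).toMultilinearMap
  calc ∑ ε : n → ι, (∏ i, c i (ε i)) * (of fun i => r i (ε i)).det
      = ∑ ε : n → ι, D fun i => c i (ε i) • r i (ε i) :=
        Finset.sum_congr rfl fun _ _ => (D.map_smul_univ _ _).symm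
    _ = D fun i => ∑ s, c i s • r i s := (D.map_sum (α := fun _ => ι) fun i s => c i s • r i s).symm

theorem det_updateRow_smul_one {R : Type*} [CommRing R] (c : R) (j : n) (r : n → R) :
    (updateRow (c • 1) j r).det = c ^ (Fintype.card n - 1) * r j := by
  rw [← cramer_transpose_apply, cramer_eq_adjugate_mulVec, transpose_smul, transpose_one,
    adjugate_smul, adjugate_one, smul_mulVec, one_mulVec, Pi.smul_apply, smul_eq_mul]

omit [Fintype n] in
theorem complexCharmatrix_flipRows (z : ℂ) (ε : n → ℤˣ) (g : n → n → ℝ) :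
    complexCharmatrix z (flipRows ε g) =
      of fun i => z • (1 : Matrix n n ℂ) i - ((ε i : ℤ) : ℂ) • fun j => (g i j : ℂ) := by
  ext i j
  simp [complexCharmatrix, flipRows]

theorem sum_det_complexCharmatrix_flipRows (z : ℂ) (g : n → n → ℝ) :
    ∑ ε : n → ℤˣ, (complexCharmatrix z (flipRows ε g)).det = (2 * z) ^ Fintype.card n := by
  have hsum := sum_prod_mul_det (fun _ _ => 1) fun i (s : ℤˣ) =>
    z • (1 : Matrix n n ℂ) i - ((s : ℤ) : ℂ) • fun j => (g i j : ℂ)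
  simp only [Finset.prod_const_one, one_mul, ← complexCharmatrix_flipRows] at hsum
  have hrows : (of fun i => ∑ s : ℤˣ, (1 : ℂ) •
      (z • (1 : Matrix n n ℂ) i - ((s : ℤ) : ℂ) • fun j => (g i j : ℂ))) = (2 * z) • 1 := by
    ext i j
    simp
    ring
  rw [hsum, hrows, det_smul, det_one, mul_one]

theorem sum_sign_mul_det_complexCharmatrix_flipRows (z : ℂ) (g : n → n → ℝ) (j : n) :
    ∑ ε : n → ℤˣ, ((ε j : ℤ) : ℂ) * (complexCharmatrix z (flipRows ε g)).det =
      -2 * (2 * z) ^ (Fintype.card n - 1) * g j j := by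
  have hsum := sum_prod_mul_det (fun i (s : ℤˣ) => if i = j then ((s : ℤ) : ℂ) else 1)
    fun i s => z • (1 : Matrix n n ℂ) i - ((s : ℤ) : ℂ) • fun j => (g i j : ℂ)
  simp only [Fintype.prod_ite_eq', ← complexCharmatrix_flipRows] at hsum
  have hrows : (of fun i => ∑ s : ℤˣ, (if i = j then ((s : ℤ) : ℂ) else 1) •
      (z • (1 : Matrix n n ℂ) i - ((s : ℤ) : ℂ) • fun j => (g i j : ℂ))) =
      updateRow ((2 * z) • 1) j fun l => -2 * (g j l : ℂ) := by
    ext i l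
    obtain rfl | hij := eq_or_ne i j
    · simp
      ring
    · simp [hij]
      ring
  rw [hsum, hrows, det_updateRow_smul_one]
  ring

theorem sum_det_complexCharmatrix_mul_trace_flipRows (z : ℂ) (g : n → n → ℝ) :
    ∑ ε : n → ℤˣ, (complexCharmatrix z (flipRows ε g)).det * ((of (flipRows ε g)).trace : ℂ) =
      -2 * (2 * z) ^ (Fintype.card n - 1) * ((∑ j, g j j ^ 2 : ℝ) : ℂ) := by
  have htrace (ε : n → ℤˣ) : ((of (flipRows ε g)).trace : ℂ) = ∑ j, ((ε j : ℤ) : ℂ) * g j j := by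
    simp [trace, flipRows]
  simp only [htrace, Finset.mul_sum]
  rw [Finset.sum_comm, Complex.ofReal_sum, Finset.mul_sum]
  refine Finset.sum_congr rfl fun j _ => ?_
  rw [Complex.ofReal_pow, sq, ← mul_assoc, ← sum_sign_mul_det_complexCharmatrix_flipRows,
    Finset.sum_mul]
  exact Finset.sum_congr rfl fun ε _ => by ring

end SignAverage

section Averages

variable {N : ℕ} {a b : ℝ}

theorem norm_det_complexCharmatrix_le {n : Type*} [Fintype n] [DecidableEq n] (z : ℂ)
    (g : n → n → ℝ) :
    ‖(complexCharmatrix z g).det‖ ≤ √((1 + ‖z‖ ^ 2) ^ Fintype.card n) * √(gramDet g) := by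
  rw [← Real.sqrt_mul (by positivity)]
  exact Real.le_sqrt_of_sq_le (norm_det_complexCharmatrix_sq_le z g)

theorem abs_trace_le {n : Type*} [Fintype n] [DecidableEq n] (g : n → n → ℝ) :
    |(of g).trace| ≤ Fintype.card n * √(gramDet g) :=
  calc |(of g).trace| ≤ ∑ i, |g i i| := Finset.abs_sum_le_sum_abs _ _
    _ ≤ ∑ _i : n, √(gramDet g) :=
        Finset.sum_le_sum fun i _ => Real.abs_le_sqrt (sq_le_gramDet g i i)
    _ = Fintype.card n * √(gramDet g) := by
        rw [Finset.sum_const, Finset.card_univ, nsmul_eq_mul]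

theorem continuous_det_complexCharmatrix {n : Type*} [Fintype n] [DecidableEq n] (z : ℂ) :
    Continuous fun g : n → n → ℝ => (complexCharmatrix z g).det :=
  Continuous.matrix_det (continuous_const.sub
    (continuous_matrix fun i j => Complex.continuous_ofReal.comp (by fun_prop)))

theorem integrable_sphericalRealWeight_smul_det (ha : 0 ≤ a) (hb : a + N + 1 / 2 < b) (z : ℂ) :
    Integrable fun g => sphericalRealWeight N a b g • (complexCharmatrix z g).det :=
  integrable_sphericalRealWeight_smul ha hb (continuous_det_complexCharmatrix z) fun g =>
    (norm_det_complexCharmatrix_le z g).trans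
      (mul_le_mul_of_nonneg_left (Real.sqrt_le_self_iff.2 (.inr (one_le_gramDet g)))
        (Real.sqrt_nonneg _))

theorem integrable_sphericalRealWeight_smul_det_mul_trace (ha : 0 ≤ a) (hb : a + N + 1 / 2 < b)
    (z : ℂ) :
    Integrable fun g =>
      sphericalRealWeight N a b g • ((complexCharmatrix z g).det * ((of g).trace : ℂ)) := by
  have htrace : Continuous fun g : Fin N → Fin N → ℝ => ((of g).trace : ℂ) :=
    Complex.continuous_ofReal.comp (continuous_finsetSum _ fun i _ => by fun_prop)
  refine integrable_sphericalRealWeight_smul ha hb (K := √((1 + ‖z‖ ^ 2) ^ N) * N)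
    ((continuous_det_complexCharmatrix z).mul htrace) fun g => ?_
  have hdet := norm_det_complexCharmatrix_le z g
  have habs := abs_trace_le g
  rw [Fintype.card_fin] at hdet habs
  calc ‖(complexCharmatrix z g).det * ((of g).trace : ℂ)‖
      ≤ √((1 + ‖z‖ ^ 2) ^ N) * √(gramDet g) * (N * √(gramDet g)) := by
        rw [norm_mul, Complex.norm_real, Real.norm_eq_abs]
        gcongr
    _ = √((1 + ‖z‖ ^ 2) ^ N) * N * gramDet g := by
        rw [mul_mul_mul_comm, Real.mul_self_sqrt (gramDet_pos g).le]

theorem integral_sphericalRealWeight_smul_det (ha : 0 ≤ a) (hb : a + N + 1 / 2 < b) (z : ℂ) :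
    ∫ g, sphericalRealWeight N a b g • (complexCharmatrix z g).det =
      z ^ N * ((∫ g, sphericalRealWeight N a b g : ℝ) : ℂ) := by
  have haverage := two_pow_smul_integral_sphericalRealWeight_smul
    (integrable_sphericalRealWeight_smul_det ha hb z)
  simp only [sum_det_complexCharmatrix_flipRows, Fintype.card_fin, Complex.real_smul,
    integral_mul_const, integral_complex_ofReal] at haverage
  push_cast at haverage
  refine mul_left_cancel₀ (pow_ne_zero N two_ne_zero) (haverage.trans ?_)
  ring

theorem integral_sphericalRealWeight_smul_det_mul_trace (hN : 0 < N) (ha : 0 ≤ a)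
    (hb : a + N + 1 / 2 < b) (z : ℂ) :
    ∫ g, sphericalRealWeight N a b g • ((complexCharmatrix z g).det * ((of g).trace : ℂ)) =
      -z ^ (N - 1) * ((∫ g, sphericalRealWeight N a b g * ∑ j, g j j ^ 2 : ℝ) : ℂ) := by
  have haverage := two_pow_smul_integral_sphericalRealWeight_smul
    (integrable_sphericalRealWeight_smul_det_mul_trace ha hb z)
  simp only [sum_det_complexCharmatrix_mul_trace_flipRows, Fintype.card_fin, Complex.real_smul,
    mul_left_comm _ (-2 * (2 * z) ^ (N - 1)), ← Complex.ofReal_mul, integral_const_mul,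
    integral_complex_ofReal] at haverage
  push_cast at haverage
  refine mul_left_cancel₀ (pow_ne_zero N two_ne_zero) (haverage.trans ?_)
  rw [mul_pow, ← mul_assoc, neg_mul, ← pow_succ', Nat.sub_add_cancel hN]
  ring

/-- The average `⟨f⟩` over the real spherical ensemble of size `N` with parameters `(a, b)`. -/
noncomputable def sphericalRealMean (N : ℕ) (a b : ℝ) (f : (Fin N → Fin N → ℝ) → ℂ) : ℂ :=
  (∫ g, (sphericalRealWeight N a b g : ℂ) * f g) / ((∫ g, sphericalRealWeight N a b g : ℝ) : ℂ)

theorem sphericalRealMean_det (ha : 0 ≤ a) (hb : a + N + 1 / 2 < b) (z : ℂ) :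
    sphericalRealMean N a b (fun g => (complexCharmatrix z g).det) = z ^ N := by
  have hZ : ((∫ g, sphericalRealWeight N a b g : ℝ) : ℂ) ≠ 0 :=
    Complex.ofReal_ne_zero.2 (integral_sphericalRealWeight_pos ha hb).ne'
  exact (div_eq_iff hZ).2 (integral_sphericalRealWeight_smul_det ha hb z)

theorem sphericalRealMean_det_mul_trace (hN : 0 < N) (ha : 0 ≤ a) (hb : a + N + 1 / 2 < b)
    (z : ℂ) :
    sphericalRealMean N a b (fun g => (complexCharmatrix z g).det * ((of g).trace : ℂ)) =
      -z ^ (N - 1) * (((a + N / 2) / (b - (N + a + 1 / 2)) : ℝ) : ℂ) := by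
  have hZ : ((∫ g, sphericalRealWeight N a b g : ℝ) : ℂ) ≠ 0 :=
    Complex.ofReal_ne_zero.2 (integral_sphericalRealWeight_pos ha hb).ne'
  have hmoment : ∫ g, sphericalRealWeight N a b g * ∑ j, g j j ^ 2 =
      (a + N / 2) / (b - (N + a + 1 / 2)) * ∫ g, sphericalRealWeight N a b g := by
    rw [integral_sphericalRealWeight_mul_sum_diag_sq ha hb ⟨0, hN⟩, div_mul_eq_mul_div,
      eq_div_iff (by linarith)]
    linear_combination (1 / 2) * integral_sphericalRealWeight_mul_dotProduct_self ha hb ⟨0, hN⟩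
  refine (div_eq_iff hZ).2 ?_
  rw [mul_assoc, ← Complex.ofReal_mul, ← hmoment]
  exact integral_sphericalRealWeight_smul_det_mul_trace hN ha hb z

end Averages

theorem realSpherical_odd_skew_orthogonal_poly_general {N : ℕ} (hN : 0 < N) {a b : ℝ} (ha : 0 ≤ a)
    (hb : a + N + 1 / 2 < b) (z : ℂ) :
    sphericalRealMean N a b (fun g => (complexCharmatrix z g).det * ((of g).trace : ℂ)) =
        -z ^ (N - 1) * (((a + N / 2) / (b - (N + a + 1 / 2)) : ℝ) : ℂ) ∧
      z * sphericalRealMean N a b (fun g => (complexCharmatrix z g).det) +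
          sphericalRealMean N a b (fun g => (complexCharmatrix z g).det * ((of g).trace : ℂ)) =
        z ^ (N + 1) - z ^ (N - 1) * (((a + N / 2) / (b - (N + a + 1 / 2)) : ℝ) : ℂ) := by
  have htrace := sphericalRealMean_det_mul_trace hN ha hb z
  refine ⟨htrace, ?_⟩
  rw [htrace, sphericalRealMean_det ha hb]
  ring

/-- For the real spherical ensemble of size `2n` with parameters `(α₁, α₂)`:
`⟨det (z I - G) Tr G⟩ = -z^(2n-1) (α₁+n)/(α₂ - (2n + α₁ + 1/2))`, and consequently the
odd-degree skew orthogonal polynomial `Q_{2n+1}(z) = z ⟨det (z I - G)⟩ + ⟨det (z I - G) Tr G⟩`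
equals `z^(2n+1) - z^(2n-1) (α₁+n)/(α₂ - (2n + α₁ + 1/2))`. -/
theorem realSpherical_odd_skew_orthogonal_poly (n : ℕ) (hn : 0 < n)
    (α₁ α₂ : ℝ) (hα₁ : 0 ≤ α₁) (hα₂ : α₁ + 3 * n + 1 < α₂) (z : ℂ) :
    (∫ g : Fin (2 * n) → Fin (2 * n) → ℝ,
          (sphericalRealWeight (2 * n) α₁ α₂ g : ℂ) *
            ((z • (1 : Matrix (Fin (2 * n)) (Fin (2 * n)) ℂ)
              - (Matrix.of g).map ((↑) : ℝ → ℂ)).det * ((Matrix.of g).trace : ℂ))) /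
        ((∫ g : Fin (2 * n) → Fin (2 * n) → ℝ, sphericalRealWeight (2 * n) α₁ α₂ g : ℝ) : ℂ)
      = -z ^ (2 * n - 1) *
          (((α₁ + n) / (α₂ - (2 * n + α₁ + 1 / 2)) : ℝ) : ℂ) ∧
    z * ((∫ g : Fin (2 * n) → Fin (2 * n) → ℝ,
          (sphericalRealWeight (2 * n) α₁ α₂ g : ℂ) *
            (z • (1 : Matrix (Fin (2 * n)) (Fin (2 * n)) ℂ)
              - (Matrix.of g).map ((↑) : ℝ → ℂ)).det) /
        ((∫ g : Fin (2 * n) → Fin (2 * n) → ℝ, sphericalRealWeight (2 * n) α₁ α₂ g : ℝ) : ℂ))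
      + (∫ g : Fin (2 * n) → Fin (2 * n) → ℝ,
          (sphericalRealWeight (2 * n) α₁ α₂ g : ℂ) *
            ((z • (1 : Matrix (Fin (2 * n)) (Fin (2 * n)) ℂ)
              - (Matrix.of g).map ((↑) : ℝ → ℂ)).det * ((Matrix.of g).trace : ℂ))) /
        ((∫ g : Fin (2 * n) → Fin (2 * n) → ℝ, sphericalRealWeight (2 * n) α₁ α₂ g : ℝ) : ℂ)
      = z ^ (2 * n + 1) - z ^ (2 * n - 1) *
          (((α₁ + n) / (α₂ - (2 * n + α₁ + 1 / 2)) : ℝ) : ℂ) := by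
  have hn' : (1 : ℝ) ≤ n := by exact_mod_cast hn
  have hgeneral := realSpherical_odd_skew_orthogonal_poly_general (N := 2 * n) (b := α₂) (by lia)
    hα₁ (by push_cast; linarith) z
  rwa [Nat.cast_mul, Nat.cast_ofNat, mul_div_cancel_left₀ _ two_ne_zero] at hgeneral
end

section
/- Let n be a positive integer and let β₁, β₂ be real parameters with β₁ ≥ 0 and β₂ ≥ 0. For G drawn from the real anti-spherical ensemble of size 2n with parameters (β₁, β₂), and for every complex number z, ⟨det(z·I − G)·Tr(G)⟩ = −z^{2n−1}·(β₁+n)/(β₂ + 2n + β₁ + 1/2). Consequently the odd-degree skew orthogonal polynomial Q_{2n+1}(z) := z·⟨det(z·I − G)⟩ + ⟨det(z·I − G)·Tr(G)⟩ equals z^{2n+1} − z^{2n−1}·(β₁+n)/(β₂ + 2n + β₁ + 1/2). -/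
open MeasureTheory Matrix

/-- The (unnormalized) density of the real anti-spherical ensemble of size `N` with
parameters `(β₁, β₂)`: `det(Gᵀ G)^{β₁} det(I - Gᵀ G)^{β₂}` on the set where
`I - Gᵀ G` is positive definite, and `0` elsewhere. -/
noncomputable def antiSphericalRealWeight (N : ℕ) (β₁ β₂ : ℝ) (g : Fin N → Fin N → ℝ) : ℝ :=
  Set.indicator {g' : Fin N → Fin N → ℝ | (1 - (Matrix.of g')ᵀ * Matrix.of g').PosDef}
    (fun g' => ((Matrix.of g')ᵀ * Matrix.of g').det ^ β₁ *
      (1 - (Matrix.of g')ᵀ * Matrix.of g').det ^ β₂) g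

/-!
The divergence theorem on `{GᵀG < I}` for the density times the vector field `G(I - GᵀG)` gives the
mean of `Tr GᵀG`. For real `β₁, β₂ ≥ 0` the density need not be `C¹` where `det G = 0` or on the
boundary, so it is first regularized and the identity is obtained in the limit.

The ensemble is invariant under `G ↦ UG` for orthogonal `U`. Changing the sign of a single row
therefore kills every term of the multilinear expansion of `⟨det(z - G) Tr G⟩` except
`-z^(N-1) ⟨∑ᵢ Gᵢᵢ²⟩`, and exchanging rows shows that `⟨∑ᵢ Gᵢᵢ²⟩ = ⟨Tr GᵀG⟩ / N`.
-/

open Filter Topology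

section Divergence

variable {E F : Type*} [NormedAddCommGroup E] [NormedSpace ℝ E]
  [NormedAddCommGroup F] [NormedSpace ℝ F]

lemma hasFDerivAt_indicator_of_frontier {s : Set E} {f : E → F} {f' : E → E →L[ℝ] F} {x : E}
    (hf : HasFDerivAt f (f' x) x) (hx : x ∈ frontier s → f x = 0 ∧ f' x = 0) :
    HasFDerivAt (s.indicator f) (s.indicator f' x) x := by
  by_cases hint : x ∈ interior s
  · rw [Set.indicator_of_mem (interior_subset hint)]
    exact hf.congr_of_eventuallyEq
      (eventuallyEq_of_mem (mem_interior_iff_mem_nhds.1 hint) fun _ hy => Set.indicator_of_mem hy f)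
  by_cases hcl : x ∈ closure s
  · obtain ⟨hfx, hf'x⟩ := hx ⟨hcl, hint⟩
    have hzero : s.indicator f x = 0 ∧ s.indicator f' x = 0 := by
      by_cases hxs : x ∈ s <;> simp [hxs, hfx, hf'x]
    rw [hasFDerivAt_iff_isLittleO] at hf ⊢
    simp only [hfx, hf'x, hzero, sub_zero, _root_.zero_apply] at hf ⊢
    exact (Asymptotics.isBigO_of_le _ fun y => norm_indicator_le_norm_self f y).trans_isLittleO hf
  · rw [Set.indicator_of_notMem fun hxs => hcl (subset_closure hxs)]
    refine (hasFDerivAt_const (0 : F) x).congr_of_eventuallyEq ?_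
    exact eventuallyEq_of_mem (isClosed_closure.isOpen_compl.mem_nhds hcl) fun y hy =>
      Set.indicator_of_notMem (fun hys => hy (subset_closure hys)) f

variable [FiniteDimensional ℝ E] [MeasurableSpace E] [BorelSpace E] (μ : Measure E)
  [μ.IsAddHaarMeasure]

theorem integral_trace_hasFDerivAt_eq_zero {X : E → E} {X' : E → E →L[ℝ] E}
    (hX : ∀ x, HasFDerivAt X (X' x) x) (hXint : Integrable X μ) (hX'int : Integrable X' μ) :
    ∫ x, LinearMap.trace ℝ E (X' x) ∂μ = 0 := by
  let b := Module.finBasis ℝ E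
  let c i : E →L[ℝ] ℝ := (b.coord i).toContinuousLinearMap
  have hc i : Integrable (fun x => c i (X' x (b i))) μ :=
    (c i).integrable_comp (hX'int.apply_continuousLinearMap (b i))
  have hpartial i : ∫ x, c i (X' x (b i)) ∂μ = 0 := by
    have hline x : HasLineDerivAt ℝ (fun y => c i (X y)) (c i (X' x (b i))) x (b i) :=
      ((c i).hasFDerivAt.comp x (hX x)).hasLineDerivAt (b i)
    simpa using integral_bilinear_hasLineDerivAt_right_eq_neg_left_of_integrable
      (B := ContinuousLinearMap.mul ℝ ℝ) (μ := μ) (f := fun _ => 1) (f' := fun _ => 0) (v := b i)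
      (by simp) (by simpa using hc i) (by simpa using (c i).integrable_comp hXint)
      (fun x _ => (hasFDerivAt_const (1 : ℝ) x).hasLineDerivAt (b i)) (fun x _ => hline x)
  have htrace x : LinearMap.trace ℝ E (X' x) = ∑ i, c i (X' x (b i)) := by
    simp [LinearMap.trace_eq_matrix_trace ℝ b, Matrix.trace, LinearMap.toMatrix_apply, c]
  simp only [htrace, integral_finsetSum _ fun i _ => hc i, hpartial, Finset.sum_const_zero]

theorem setIntegral_trace_fderiv_eq_zero {s : Set E} (hs : MeasurableSet s)
    (hbdd : Bornology.IsBounded s) {X : E → E} (hX : ContDiff ℝ 1 X)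
    (hfr : ∀ x ∈ frontier s, X x = 0 ∧ fderiv ℝ X x = 0) :
    ∫ x in s, LinearMap.trace ℝ E (fderiv ℝ X x) ∂μ = 0 := by
  have hint {G : Type _} [NormedAddCommGroup G] {f : E → G} (hf : Continuous f) :
      Integrable (s.indicator f) μ :=
    (integrable_indicator_iff hs).2 ((hf.continuousOn.integrableOn_compact
      hbdd.isCompact_closure).mono_set subset_closure)
  rw [← integral_indicator hs]
  convert integral_trace_hasFDerivAt_eq_zero μ
    (fun x => hasFDerivAt_indicator_of_frontier (hX.differentiable one_ne_zero x).hasFDerivAt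
      (hfr x)) (hint hX.continuous) (hint (hX.continuous_fderiv one_ne_zero)) using 2
  ext x
  by_cases hx : x ∈ s <;> simp [hx]

theorem setIntegral_divergence_smul_eq_zero {s : Set E} (hs : MeasurableSet s)
    (hbdd : Bornology.IsBounded s) {φ : E → ℝ} {V : E → E} (hφ : ContDiff ℝ 1 φ)
    (hV : ContDiff ℝ 1 V) (hfr : ∀ x ∈ frontier s, φ x = 0 ∧ fderiv ℝ φ x = 0) :
    ∫ x in s, (φ x * LinearMap.trace ℝ E (fderiv ℝ V x) + fderiv ℝ φ x (V x)) ∂μ = 0 := by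
  have hderiv x : fderiv ℝ (φ • V) x =
      φ x • fderiv ℝ V x + (fderiv ℝ φ x).smulRight (V x) :=
    fderiv_smul (hφ.differentiable one_ne_zero x) (hV.differentiable one_ne_zero x)
  have htrace x : LinearMap.trace ℝ E (fderiv ℝ (φ • V) x) =
      φ x * LinearMap.trace ℝ E (fderiv ℝ V x) + fderiv ℝ φ x (V x) := by
    simp [hderiv]
  simp only [← htrace]
  exact setIntegral_trace_fderiv_eq_zero μ hs hbdd (hφ.smul hV) fun x hx => by
    simp [hderiv, hfr x hx]

end Divergence

section MatrixCalculus

lemma hasDerivAt_of_add_smul {m n : Type*} [Finite m] [Finite n] (g v : m → n → ℝ) :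
    HasDerivAt (fun t : ℝ => of (g + t • v)) (of v) 0 := by
  have := Fintype.ofFinite m
  have := Fintype.ofFinite n
  have h : HasDerivAt (fun t : ℝ => g + t • v) v 0 := by
    simpa using ((hasDerivAt_id (0 : ℝ)).smul_const v).const_add g
  exact h

variable {m n : Type*} [Fintype m] [DecidableEq m] [Fintype n] [DecidableEq n]

lemma trace_linearMap_matrix {R : Type*} [CommRing R] (f : Matrix m n R →ₗ[R] Matrix m n R) :
    LinearMap.trace R (Matrix m n R) f = ∑ i, ∑ j, f (single i j 1) i j := by
  rw [LinearMap.trace_eq_matrix_trace R (Matrix.stdBasis R m n), Matrix.trace,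
    Fintype.sum_prod_type]
  refine Finset.sum_congr rfl fun i _ => Finset.sum_congr rfl fun j _ => ?_
  rw [Matrix.diag_apply, LinearMap.toMatrix_apply, Matrix.stdBasis_eq_single]
  rfl

lemma contDiff_matrix_det {E : Type*} [NormedAddCommGroup E] [NormedSpace ℝ E] {k : WithTop ℕ∞}
    {A : E → Matrix m m ℝ} (hA : ∀ i j, ContDiff ℝ k fun x => A x i j) :
    ContDiff ℝ k fun x => (A x).det := by
  simp only [Matrix.det_apply]
  fun_prop

lemma hasDerivAt_matrix_det {M : ℝ → Matrix m m ℝ} {M' : Matrix m m ℝ} {t : ℝ}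
    (hM : HasDerivAt M M' t) :
    HasDerivAt (fun s => (M s).det) ((M t).adjugate * M').trace t := by
  let f : ContinuousMultilinearMap ℝ (fun _ : m => m → ℝ) ℝ :=
    ⟨(Matrix.detRowAlternating (R := ℝ) (n := m)).toMultilinearMap,
      Continuous.matrix_det (A := fun x : m → m → ℝ => Matrix.of x) continuous_id⟩
  refine ((f.hasFDerivAt (M t)).comp_hasDerivAt t hM).congr_deriv ?_
  rw [Matrix.trace_mul_comm]
  refine (f.linearDeriv_apply _ _).trans ?_
  refine Finset.sum_congr rfl fun i _ => ?_
  change ((M t).updateRow i (M' i)).det = _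
  rw [← Matrix.cramer_transpose_apply, Matrix.cramer_eq_adjugate_mulVec,
    ← Matrix.adjugate_transpose, Matrix.mulVec, Matrix.diag_apply, Matrix.mul_apply]
  simp [dotProduct, mul_comm]

open scoped Matrix.Norms.Operator in
lemma hasDerivAt_one_sub_transpose_mul_self {M : ℝ → Matrix m m ℝ} {M' : Matrix m m ℝ} {t : ℝ}
    (hM : HasDerivAt M M' t) :
    HasDerivAt (fun s => 1 - (M s)ᵀ * M s) (-(M'ᵀ * M t + (M t)ᵀ * M')) t := by
  have hMT : HasDerivAt (fun s => (M s)ᵀ) M'ᵀ t :=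
    hasDerivAt_pi.2 fun i => hasDerivAt_pi.2 fun j => hasDerivAt_pi.1 (hasDerivAt_pi.1 hM j) i
  exact (hMT.mul hM).const_sub 1

open scoped Matrix.Norms.Operator in
lemma hasDerivAt_mul_one_sub_transpose_mul_self {M : ℝ → Matrix m m ℝ} {M' : Matrix m m ℝ} {t : ℝ}
    (hM : HasDerivAt M M' t) :
    HasDerivAt (fun s => M s * (1 - (M s)ᵀ * M s))
      (M' * (1 - (M t)ᵀ * M t) - M t * (M'ᵀ * M t + (M t)ᵀ * M')) t := by
  rw [sub_eq_add_neg, ← mul_neg]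
  exact hM.mul (hasDerivAt_one_sub_transpose_mul_self hM)

lemma trace_mul_one_sub_transpose_mul_self_deriv {R : Type*} [CommRing R] {G : Matrix m m R}
    {f : Matrix m m R →ₗ[R] Matrix m m R}
    (hf : ∀ v, f v = v * (1 - Gᵀ * G) - G * (vᵀ * G + Gᵀ * v)) :
    LinearMap.trace R _ f = Fintype.card m ^ 2 - (2 * Fintype.card m + 1) * (Gᵀ * G).trace := by
  have hentry i j : f (single i j 1) i j =
      (1 - Gᵀ * G) j j - (G i j * G i j + (G * Gᵀ) i i) := by
    have hmixed : (G * ((single i j (1 : R))ᵀ * G)) i j = G i j * G i j := by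
      simp [Matrix.mul_apply, Matrix.single_apply, ite_and]
    rw [hf, Matrix.mul_add, Matrix.sub_apply, Matrix.add_apply, hmixed, ← Matrix.mul_assoc]
    simp
  have hsq : ∑ i, ∑ j, G i j * G i j = (Gᵀ * G).trace := by
    rw [Finset.sum_comm]
    simp [Matrix.trace, Matrix.mul_apply]
  have hdiag (A : Matrix m m R) : ∑ j, A j j = A.trace := rfl
  calc LinearMap.trace R _ f
      = ∑ i, ∑ j, ((1 - Gᵀ * G) j j - (G i j * G i j + (G * Gᵀ) i i)) := by
        simp only [trace_linearMap_matrix, hentry]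
    _ = Fintype.card m ^ 2 - (2 * Fintype.card m + 1) * (Gᵀ * G).trace := by
        simp only [Finset.sum_sub_distrib, Finset.sum_add_distrib, hsq, Finset.sum_const,
          Finset.card_univ, hdiag, nsmul_eq_mul, Matrix.trace_sub, Matrix.trace_one,
          Matrix.trace_mul_comm G Gᵀ, ← Finset.mul_sum]
        ring

end MatrixCalculus

section PosDef

variable {m X : Type*} [TopologicalSpace X] {A : X → Matrix m m ℝ}

lemma isClosed_setOf_posSemidef [Finite m] (hA : Continuous A) (hherm : ∀ x, (A x).IsHermitian) :
    IsClosed {x | (A x).PosSemidef} := by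
  have := Fintype.ofFinite m
  simp only [Matrix.posSemidef_iff_dotProduct_mulVec, hherm, true_and, Set.ofPred_forall]
  exact isClosed_iInter fun v => isClosed_le continuous_const
    (continuous_const.dotProduct (hA.matrix_mulVec continuous_const))

lemma posDef_iff_forall_sphere [Fintype m] {B : Matrix m m ℝ} (hB : B.IsHermitian) :
    B.PosDef ↔ ∀ v ∈ Metric.sphere (0 : m → ℝ) 1, 0 < v ⬝ᵥ (B *ᵥ v) := by
  simp only [Matrix.posDef_iff_dotProduct_mulVec, hB, true_and, star_trivial]
  refine ⟨fun h v hv => h (ne_zero_of_mem_unit_sphere ⟨v, hv⟩), fun h v hv => ?_⟩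
  have hpos : 0 < ‖v‖ := norm_pos_iff.2 hv
  have hunit := h (‖v‖⁻¹ • v) (by simp [norm_smul, hpos.ne'])
  simp only [Matrix.mulVec_smul, smul_dotProduct, dotProduct_smul, smul_eq_mul] at hunit
  exact pos_of_mul_pos_right (pos_of_mul_pos_right hunit (by positivity)) (by positivity)

lemma isOpen_setOf_posDef [Finite m] (hA : Continuous A) (hherm : ∀ x, (A x).IsHermitian) :
    IsOpen {x | (A x).PosDef} := by
  have := Fintype.ofFinite m
  simp only [posDef_iff_forall_sphere (hherm _)]
  refine isOpen_iff_mem_nhds.2 fun x hx =>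
    (isCompact_sphere (0 : m → ℝ) 1).eventually_forall_of_forall_eventually fun v hv => ?_
  have hcont : Continuous fun p : X × (m → ℝ) => p.2 ⬝ᵥ (A p.1 *ᵥ p.2) :=
    continuous_snd.dotProduct ((hA.comp continuous_fst).matrix_mulVec continuous_snd)
  exact hcont.continuousAt.eventually (lt_mem_nhds (hx v hv))

lemma det_eq_zero_of_mem_frontier_posDef [Fintype m] [DecidableEq m] (hA : Continuous A)
    (hherm : ∀ x, (A x).IsHermitian) {x : X} (hx : x ∈ frontier {x | (A x).PosDef}) :
    (A x).det = 0 := by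
  have hsemi : (A x).PosSemidef :=
    closure_minimal (fun _ hy => Matrix.PosDef.posSemidef hy) (isClosed_setOf_posSemidef hA hherm)
      (frontier_subset_closure hx)
  by_contra hdet
  rw [(isOpen_setOf_posDef hA hherm).frontier_eq] at hx
  exact hx.2 (hsemi.posDef_iff_det_ne_zero.2 hdet)

end PosDef

section OpNormBall

variable {m : Type*} [Fintype m]

/-- The Gram matrix `GᵀG` of a real square matrix `G`, given as a function of its entries because
that is where Lebesgue measure lives. -/
def gramMatrix (g : m → m → ℝ) : Matrix m m ℝ := (of g)ᵀ * of g

lemma contDiff_gramMatrix_apply {k : WithTop ℕ∞} (i j : m) :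
    ContDiff ℝ k fun g : m → m → ℝ => gramMatrix g i j := by
  simp only [gramMatrix, Matrix.mul_apply, Matrix.transpose_apply, Matrix.of_apply]
  fun_prop

lemma continuous_gramMatrix : Continuous (gramMatrix (m := m)) :=
  continuous_matrix fun i j => (contDiff_gramMatrix_apply (k := 0) i j).continuous

lemma continuous_trace_gramMatrix : Continuous fun g : m → m → ℝ => (gramMatrix g).trace :=
  continuous_gramMatrix.matrix_trace

variable [DecidableEq m]

lemma isHermitian_one_sub_gramMatrix (g : m → m → ℝ) : (1 - gramMatrix g).IsHermitian := by
  simp [Matrix.IsHermitian, gramMatrix]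

lemma continuous_one_sub_gramMatrix : Continuous fun g : m → m → ℝ => 1 - gramMatrix g :=
  continuous_const.sub continuous_gramMatrix

variable (m) in
/-- The open unit ball for the `ℓ²` operator norm: the matrices `G` with `GᵀG < I`. -/
def opNormBall : Set (m → m → ℝ) := {g | (1 - gramMatrix g).PosDef}

lemma isOpen_opNormBall : IsOpen (opNormBall m) :=
  isOpen_setOf_posDef continuous_one_sub_gramMatrix isHermitian_one_sub_gramMatrix

lemma det_one_sub_gramMatrix_pos {g : m → m → ℝ} (hg : g ∈ opNormBall m) :
    0 < (1 - gramMatrix g).det :=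
  Matrix.PosDef.det_pos hg

lemma det_one_sub_gramMatrix_eq_zero_of_mem_frontier {g : m → m → ℝ}
    (hg : g ∈ frontier (opNormBall m)) : (1 - gramMatrix g).det = 0 :=
  det_eq_zero_of_mem_frontier_posDef continuous_one_sub_gramMatrix
    isHermitian_one_sub_gramMatrix hg

lemma isBounded_opNormBall : Bornology.IsBounded (opNormBall m) := by
  have hentry {g : m → m → ℝ} (hg : g ∈ opNormBall m) (i j : m) : |g i j| ≤ 1 := by
    have hcol : ∑ k, g k j * g k j < 1 := by
      simpa [gramMatrix, Matrix.mul_apply] using Matrix.PosDef.diag_pos hg (i := j)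
    have hterm : g i j * g i j ≤ ∑ k, g k j * g k j :=
      Finset.single_le_sum (fun k _ => mul_self_nonneg (g k j)) (Finset.mem_univ i)
    exact abs_le_one_iff_mul_self_le_one.2 (hterm.trans hcol.le)
  exact (Metric.isBounded_Icc (fun _ _ => -1) (fun _ _ => 1)).subset fun g hg =>
    ⟨fun i j => (abs_le.1 (hentry hg i j)).1, fun i j => (abs_le.1 (hentry hg i j)).2⟩

lemma integrableOn_opNormBall {E : Type*} [NormedAddCommGroup E] {f : (m → m → ℝ) → E}
    (hf : Continuous f) : IntegrableOn f (opNormBall m) :=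
  (hf.continuousOn.integrableOn_compact isBounded_opNormBall.isCompact_closure).mono_set
    subset_closure

/-- The vector field `G ↦ G(I - GᵀG)` on the space of real square matrices. -/
def gramField (g : m → m → ℝ) : m → m → ℝ := of.symm (of g * (1 - gramMatrix g))

lemma contDiff_gramField {k : WithTop ℕ∞} : ContDiff ℝ k (gramField (m := m)) := by
  have hsub (i j : m) : ContDiff ℝ k fun g : m → m → ℝ => (1 - gramMatrix g) i j :=
    contDiff_const.sub (contDiff_gramMatrix_apply i j)
  exact contDiff_pi.2 fun i => contDiff_pi.2 fun j => ContDiff.sum fun l _ =>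
    (contDiff_apply_apply ℝ ℝ i l).mul (hsub l j)

lemma hasLineDerivAt_det (g v : m → m → ℝ) :
    HasLineDerivAt ℝ (fun g : m → m → ℝ => (of g).det) ((of g).adjugate * of v).trace g v := by
  simpa [HasLineDerivAt] using hasDerivAt_matrix_det (hasDerivAt_of_add_smul g v)

lemma hasLineDerivAt_det_one_sub_gramMatrix (g v : m → m → ℝ) :
    HasLineDerivAt ℝ (fun g : m → m → ℝ => (1 - gramMatrix g).det)
      ((1 - gramMatrix g).adjugate * -((of v)ᵀ * of g + (of g)ᵀ * of v)).trace g v := by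
  simpa [HasLineDerivAt, gramMatrix] using hasDerivAt_matrix_det
    (hasDerivAt_one_sub_transpose_mul_self (hasDerivAt_of_add_smul g v))

lemma trace_fderiv_gramField (g : m → m → ℝ) :
    LinearMap.trace ℝ _ (fderiv ℝ gramField g : (m → m → ℝ) →ₗ[ℝ] m → m → ℝ) =
      Fintype.card m ^ 2 - (2 * Fintype.card m + 1) * (gramMatrix g).trace := by
  refine trace_mul_one_sub_transpose_mul_self_deriv (G := of g) fun v => ?_
  have hline := hasDerivAt_mul_one_sub_transpose_mul_self (hasDerivAt_of_add_smul g (of.symm v))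
  simp only [zero_smul, add_zero, Equiv.apply_symm_apply] at hline
  have hdiff : DifferentiableAt ℝ (gramField (m := m)) g :=
    contDiff_gramField.contDiffAt.differentiableAt one_ne_zero
  exact (hdiff.hasFDerivAt.hasLineDerivAt (of.symm v)).unique hline

lemma trace_adjugate_mul_gramField (g : m → m → ℝ) :
    ((of g).adjugate * of (gramField g)).trace =
      (of g).det * (Fintype.card m - (gramMatrix g).trace) := by
  simp [gramField, ← Matrix.mul_assoc, Matrix.adjugate_mul]

lemma trace_adjugate_one_sub_gramMatrix_mul_gramField (g : m → m → ℝ) :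
    ((1 - gramMatrix g).adjugate * -((of (gramField g))ᵀ * of g + (of g)ᵀ * of (gramField g))).trace
      = -2 * ((1 - gramMatrix g).det * (gramMatrix g).trace) := by
  have hfield : (of (gramField g))ᵀ * of g + (of g)ᵀ * of (gramField g) =
      (1 - gramMatrix g) * gramMatrix g + gramMatrix g * (1 - gramMatrix g) := by
    simp [gramField, Matrix.mul_assoc, gramMatrix]
  rw [hfield, Matrix.mul_neg, Matrix.trace_neg, Matrix.mul_add, Matrix.trace_add,
    ← Matrix.mul_assoc, Matrix.adjugate_mul, Matrix.trace_mul_comm _ (gramMatrix g * _),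
    Matrix.mul_assoc, Matrix.mul_adjugate]
  simp
  ring

lemma contDiff_comp_det_mul_comp_det {H F : ℝ → ℝ} {k : WithTop ℕ∞} (hH : ContDiff ℝ k H)
    (hF : ContDiff ℝ k F) :
    ContDiff ℝ k fun g : m → m → ℝ => H (of g).det * F (1 - gramMatrix g).det :=
  (hH.comp (contDiff_matrix_det fun i j => contDiff_apply_apply ℝ ℝ i j)).mul
    (hF.comp (contDiff_matrix_det fun i j =>
      contDiff_const.sub (contDiff_gramMatrix_apply i j)))

lemma hasLineDerivAt_comp_det_mul_comp_det {H F : ℝ → ℝ} (hH : Differentiable ℝ H)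
    (hF : Differentiable ℝ F) (g v : m → m → ℝ) :
    HasLineDerivAt ℝ (fun g : m → m → ℝ => H (of g).det * F (1 - gramMatrix g).det)
      (deriv H (of g).det * ((of g).adjugate * of v).trace * F (1 - gramMatrix g).det +
        H (of g).det * (deriv F (1 - gramMatrix g).det *
          ((1 - gramMatrix g).adjugate * -((of v)ᵀ * of g + (of g)ᵀ * of v)).trace)) g v := by
  have hHd := (hH (of g).det).hasDerivAt.comp_of_eq 0 (hasLineDerivAt_det g v) (by simp)
  have hFD := (hF (1 - gramMatrix g).det).hasDerivAt.comp_of_eq 0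
    (hasLineDerivAt_det_one_sub_gramMatrix g v) (by simp)
  simpa [HasLineDerivAt] using hHd.fun_mul hFD

-- The divergence theorem for the vector field `H (det G) * F (det (I - GᵀG)) • G(I - GᵀG)`.
theorem setIntegral_opNormBall_divergence_eq_zero {H F : ℝ → ℝ} (hH : ContDiff ℝ 1 H)
    (hF : ContDiff ℝ 1 F) (hF₀ : F 0 = 0) (hF'₀ : deriv F 0 = 0) :
    ∫ g in opNormBall m,
      (H (of g).det * F (1 - gramMatrix g).det *
          (Fintype.card m ^ 2 - (2 * Fintype.card m + 1) * (gramMatrix g).trace) +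
        (of g).det * deriv H (of g).det * F (1 - gramMatrix g).det *
          (Fintype.card m - (gramMatrix g).trace) -
        2 * (H (of g).det * ((1 - gramMatrix g).det * deriv F (1 - gramMatrix g).det) *
          (gramMatrix g).trace)) = 0 := by
  let φ : (m → m → ℝ) → ℝ := fun g => H (of g).det * F (1 - gramMatrix g).det
  have hφ : ContDiff ℝ 1 φ := contDiff_comp_det_mul_comp_det hH hF
  have hφ' (g v) := ((hφ.differentiable one_ne_zero g).hasFDerivAt.hasLineDerivAt v).unique
    (hasLineDerivAt_comp_det_mul_comp_det (hH.differentiable one_ne_zero)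
      (hF.differentiable one_ne_zero) g v)
  rw [← setIntegral_divergence_smul_eq_zero (volume : Measure (m → m → ℝ))
    isOpen_opNormBall.measurableSet isBounded_opNormBall hφ contDiff_gramField fun g hg => ?_]
  · refine integral_congr_ae (ae_of_all _ fun g => ?_)
    simp only [hφ', trace_fderiv_gramField, trace_adjugate_mul_gramField,
      trace_adjugate_one_sub_gramMatrix_mul_gramField, φ]
    ring
  · have hD := det_one_sub_gramMatrix_eq_zero_of_mem_frontier hg
    refine ⟨by simp [φ, hD, hF₀], ContinuousLinearMap.ext fun v => ?_⟩
    simp [hφ', hD, hF₀, hF'₀]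

end OpNormBall

section Regularization

variable {β ε x : ℝ}

/-- A smooth regularization of `x ↦ (x ^ 2) ^ β`, which may not be differentiable at `0`. -/
noncomputable def smoothedPow (β ε x : ℝ) : ℝ := (x ^ 2 + ε) ^ β

/-- An approximation of `x ↦ x ^ β` on the half-line `0 < x` by functions that vanish to second
order at `0`. -/
noncomputable def flattenedPow (β ε x : ℝ) : ℝ := x ^ (β + 2) / (x ^ 2 + ε)

lemma contDiff_smoothedPow {k : WithTop ℕ∞} (hε : 0 < ε) : ContDiff ℝ k (smoothedPow β ε) :=
  ContDiff.rpow_const_of_ne (by fun_prop) fun _ => by positivity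

lemma self_mul_deriv_smoothedPow (hε : 0 < ε) :
    x * deriv (smoothedPow β ε) x = 2 * β * (x ^ 2 / (x ^ 2 + ε)) * smoothedPow β ε x := by
  have hpos : x ^ 2 + ε ≠ 0 := by positivity
  have hderiv : HasDerivAt (smoothedPow β ε) (2 * x * β * (x ^ 2 + ε) ^ (β - 1)) x := by
    unfold smoothedPow
    simpa using ((hasDerivAt_pow 2 x).add_const ε).rpow_const (p := β) (Or.inl hpos)
  rw [hderiv.deriv, Real.rpow_sub_one hpos, smoothedPow]
  ring

lemma smoothedPow_nonneg (hε : 0 < ε) : 0 ≤ smoothedPow β ε x := by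
  unfold smoothedPow
  positivity

lemma abs_smoothedPow_le (hβ : 0 ≤ β) (hε : 0 < ε) (hε₁ : ε ≤ 1) :
    |smoothedPow β ε x| ≤ (x ^ 2 + 1) ^ β := by
  rw [abs_of_nonneg (smoothedPow_nonneg hε)]
  exact Real.rpow_le_rpow (by positivity) (by gcongr) hβ

lemma abs_self_mul_deriv_smoothedPow_le (hβ : 0 ≤ β) (hε : 0 < ε) (hε₁ : ε ≤ 1) :
    |x * deriv (smoothedPow β ε) x| ≤ 2 * β * (x ^ 2 + 1) ^ β := by
  have hH := smoothedPow_nonneg (β := β) (x := x) hε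
  have hratio : x ^ 2 / (x ^ 2 + ε) ≤ 1 := div_le_one_of_le₀ (by linarith) (by positivity)
  rw [self_mul_deriv_smoothedPow hε, abs_of_nonneg (by positivity)]
  calc 2 * β * (x ^ 2 / (x ^ 2 + ε)) * smoothedPow β ε x
      ≤ 2 * β * 1 * (x ^ 2 + 1) ^ β := by
        gcongr
        exact (le_abs_self _).trans (abs_smoothedPow_le hβ hε hε₁)
    _ = 2 * β * (x ^ 2 + 1) ^ β := by ring

lemma tendsto_smoothedPow (hβ : 0 ≤ β) :
    Tendsto (fun ε => smoothedPow β ε x) (𝓝[>] 0) (𝓝 ((x ^ 2) ^ β)) := by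
  have h : Continuous fun ε : ℝ => (x ^ 2 + ε) ^ β :=
    (Real.continuous_rpow_const hβ).comp (continuous_const.add continuous_id)
  simpa [smoothedPow] using (h.tendsto 0).mono_left nhdsWithin_le_nhds

lemma tendsto_sq_div_sq_add (hx : x ≠ 0) :
    Tendsto (fun ε => x ^ 2 / (x ^ 2 + ε)) (𝓝[>] 0) (𝓝 1) := by
  have h : ContinuousAt (fun ε : ℝ => x ^ 2 / (x ^ 2 + ε)) 0 :=
    continuousAt_const.div (by fun_prop) (by simpa using hx)
  simpa [hx] using h.tendsto.mono_left nhdsWithin_le_nhds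

lemma tendsto_self_mul_deriv_smoothedPow (hβ : 0 ≤ β) :
    Tendsto (fun ε => x * deriv (smoothedPow β ε) x) (𝓝[>] 0) (𝓝 (2 * β * (x ^ 2) ^ β)) := by
  rcases eq_or_ne x 0 with rfl | hx
  · rcases hβ.eq_or_lt with rfl | hpos
    · simp
    · simp [hpos.ne']
  · have h := ((tendsto_sq_div_sq_add hx).const_mul (2 * β)).mul (tendsto_smoothedPow (x := x) hβ)
    rw [mul_one] at h
    refine h.congr' (eventually_mem_nhdsWithin.mono fun ε hε => ?_)
    exact (self_mul_deriv_smoothedPow hε).symm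

lemma flattenedPow_eq (hx : 0 < x) :
    flattenedPow β ε x = x ^ 2 / (x ^ 2 + ε) * x ^ β := by
  rw [flattenedPow, Real.rpow_add hx, Real.rpow_two]
  ring

lemma contDiff_flattenedPow (hβ : 0 ≤ β) (hε : 0 < ε) : ContDiff ℝ 1 (flattenedPow β ε) :=
  (Real.contDiff_rpow_const_of_le (n := 1) (by norm_num; linarith)).div (by fun_prop)
    fun _ => by positivity

lemma hasDerivAt_flattenedPow (hβ : 0 ≤ β) (hε : 0 < ε) :
    HasDerivAt (flattenedPow β ε) (((β + 2) * x ^ (β + 1) * (x ^ 2 + ε) - x ^ (β + 2) * (2 * x)) /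
      (x ^ 2 + ε) ^ 2) x := by
  have hpow : HasDerivAt (fun y : ℝ => y ^ (β + 2)) ((β + 2) * x ^ (β + 1)) x := by
    convert Real.hasDerivAt_rpow_const (x := x) (p := β + 2) (Or.inr (by linarith)) using 3
    ring
  have hden : HasDerivAt (fun y : ℝ => y ^ 2 + ε) (2 * x) x := by
    simpa using (hasDerivAt_pow 2 x).add_const ε
  exact hpow.div hden (by positivity)

lemma flattenedPow_zero (hβ : 0 ≤ β) : flattenedPow β ε 0 = 0 := by
  have hβ₂ : β + 2 ≠ 0 := by positivity
  simp [flattenedPow, hβ₂]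

lemma deriv_flattenedPow_zero (hβ : 0 ≤ β) (hε : 0 < ε) : deriv (flattenedPow β ε) 0 = 0 := by
  have hβ₁ : β + 1 ≠ 0 := by positivity
  simp [(hasDerivAt_flattenedPow hβ hε).deriv, hβ₁]

lemma self_mul_deriv_flattenedPow (hβ : 0 ≤ β) (hε : 0 < ε) (hx : 0 < x) :
    x * deriv (flattenedPow β ε) x =
      (β + 2 - 2 * (x ^ 2 / (x ^ 2 + ε))) * flattenedPow β ε x := by
  have hpow : x ^ (β + 2) = x * x ^ (β + 1) := by
    rw [← Real.rpow_one_add' hx.le (by positivity)]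
    ring_nf
  rw [(hasDerivAt_flattenedPow hβ hε).deriv, flattenedPow, hpow]
  field_simp

lemma abs_flattenedPow_le (hε : 0 < ε) (hx : 0 < x) : |flattenedPow β ε x| ≤ x ^ β := by
  rw [flattenedPow_eq hx, abs_of_nonneg (by positivity)]
  exact mul_le_of_le_one_left (by positivity) (div_le_one_of_le₀ (by linarith) (by positivity))

lemma abs_self_mul_deriv_flattenedPow_le (hβ : 0 ≤ β) (hε : 0 < ε) (hx : 0 < x) :
    |x * deriv (flattenedPow β ε) x| ≤ (β + 2) * x ^ β := by
  have hratio : x ^ 2 / (x ^ 2 + ε) ≤ 1 := div_le_one_of_le₀ (by linarith) (by positivity)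
  have hratio₀ : 0 ≤ x ^ 2 / (x ^ 2 + ε) := by positivity
  rw [self_mul_deriv_flattenedPow hβ hε hx, abs_mul, abs_of_nonneg (by linarith)]
  gcongr
  · linarith
  · exact abs_flattenedPow_le hε hx

lemma tendsto_flattenedPow (hx : 0 < x) :
    Tendsto (fun ε => flattenedPow β ε x) (𝓝[>] 0) (𝓝 (x ^ β)) := by
  simpa [flattenedPow_eq hx] using (tendsto_sq_div_sq_add hx.ne').mul_const (x ^ β)

lemma tendsto_self_mul_deriv_flattenedPow (hβ : 0 ≤ β) (hx : 0 < x) :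
    Tendsto (fun ε => x * deriv (flattenedPow β ε) x) (𝓝[>] 0) (𝓝 (β * x ^ β)) := by
  have h := (((tendsto_sq_div_sq_add hx.ne').const_mul 2).const_sub (β + 2)).mul
    (tendsto_flattenedPow (β := β) hx)
  rw [mul_one, add_sub_cancel_right] at h
  refine h.congr' (eventually_mem_nhdsWithin.mono fun ε hε => ?_)
  exact (self_mul_deriv_flattenedPow hβ hε hx).symm

end Regularization

section RegularizedDivergence

variable {β₁ β₂ d D A B T : ℝ}

lemma abs_regularized_divergence_le {ε : ℝ} (hβ₁ : 0 ≤ β₁) (hβ₂ : 0 ≤ β₂) (hε : ε ∈ Set.Ioc 0 1)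
    (hD : 0 < D) :
    |smoothedPow β₁ ε d * flattenedPow β₂ ε D * A +
        d * deriv (smoothedPow β₁ ε) d * flattenedPow β₂ ε D * B -
        2 * (smoothedPow β₁ ε d * (D * deriv (flattenedPow β₂ ε) D) * T)| ≤
      (d ^ 2 + 1) ^ β₁ * D ^ β₂ * (|A| + 2 * β₁ * |B| + 2 * (β₂ + 2) * |T|) := by
  have hH := abs_smoothedPow_le (x := d) hβ₁ hε.1 hε.2
  have hH' := abs_self_mul_deriv_smoothedPow_le (x := d) hβ₁ hε.1 hε.2
  have hF := abs_flattenedPow_le (β := β₂) hε.1 hD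
  have hF' := abs_self_mul_deriv_flattenedPow_le hβ₂ hε.1 hD
  set H := smoothedPow β₁ ε d
  set H' := d * deriv (smoothedPow β₁ ε) d
  set F := flattenedPow β₂ ε D
  set F' := D * deriv (flattenedPow β₂ ε) D
  set P := (d ^ 2 + 1) ^ β₁
  calc |H * F * A + H' * F * B - 2 * (H * F' * T)|
      ≤ |H * F * A| + |H' * F * B| + |2 * (H * F' * T)| :=
        (abs_sub _ _).trans (add_le_add_left (abs_add_le _ _) _)
    _ = |H| * |F| * |A| + |H'| * |F| * |B| + 2 * (|H| * |F'| * |T|) := by simp [abs_mul]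
    _ ≤ P * D ^ β₂ * |A| + 2 * β₁ * P * D ^ β₂ * |B| +
          2 * (P * ((β₂ + 2) * D ^ β₂) * |T|) := by gcongr
    _ = P * D ^ β₂ * (|A| + 2 * β₁ * |B| + 2 * (β₂ + 2) * |T|) := by ring

lemma tendsto_regularized_divergence (hβ₁ : 0 ≤ β₁) (hβ₂ : 0 ≤ β₂) (hD : 0 < D) :
    Tendsto (fun ε => smoothedPow β₁ ε d * flattenedPow β₂ ε D * A +
        d * deriv (smoothedPow β₁ ε) d * flattenedPow β₂ ε D * B -
        2 * (smoothedPow β₁ ε d * (D * deriv (flattenedPow β₂ ε) D) * T)) (𝓝[>] 0)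
      (𝓝 ((d ^ 2) ^ β₁ * D ^ β₂ * (A + 2 * β₁ * B - 2 * β₂ * T))) := by
  have hH := tendsto_smoothedPow (x := d) hβ₁
  have hF := tendsto_flattenedPow (β := β₂) hD
  have h := (((hH.mul hF).mul_const A).add
    (((tendsto_self_mul_deriv_smoothedPow (x := d) hβ₁).mul hF).mul_const B)).sub
    (((hH.mul (tendsto_self_mul_deriv_flattenedPow hβ₂ hD)).mul_const T).const_mul 2)
  convert h using 2
  ring

end RegularizedDivergence

section Moment

variable {m : Type*} [Fintype m] [DecidableEq m] {β₁ β₂ : ℝ}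

/-- The density `det(GᵀG)^β₁ det(I - GᵀG)^β₂`, without the cutoff to `GᵀG < I`. -/
noncomputable def antiSphericalDensity (β₁ β₂ : ℝ) (g : m → m → ℝ) : ℝ :=
  (gramMatrix g).det ^ β₁ * (1 - gramMatrix g).det ^ β₂

lemma det_gramMatrix (g : m → m → ℝ) : (gramMatrix g).det = (of g).det ^ 2 := by
  rw [gramMatrix, det_mul, det_transpose, pow_two]

lemma continuous_det_of : Continuous fun g : m → m → ℝ => (of g).det :=
  Continuous.matrix_det continuous_id

lemma continuous_det_one_sub_gramMatrix :
    Continuous fun g : m → m → ℝ => (1 - gramMatrix g).det :=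
  continuous_one_sub_gramMatrix.matrix_det

lemma continuous_antiSphericalDensity (hβ₁ : 0 ≤ β₁) (hβ₂ : 0 ≤ β₂) :
    Continuous (antiSphericalDensity (m := m) β₁ β₂) :=
  (continuous_gramMatrix.matrix_det.rpow_const fun _ => Or.inr hβ₁).mul
    (continuous_det_one_sub_gramMatrix.rpow_const fun _ => Or.inr hβ₂)

theorem setIntegral_antiSphericalDensity_mul_divergence_eq_zero (hβ₁ : 0 ≤ β₁) (hβ₂ : 0 ≤ β₂) :
    ∫ g in opNormBall m, antiSphericalDensity β₁ β₂ g *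
      (Fintype.card m ^ 2 - (2 * Fintype.card m + 1) * (gramMatrix g).trace +
        2 * β₁ * (Fintype.card m - (gramMatrix g).trace) - 2 * β₂ * (gramMatrix g).trace) = 0 := by
  have hd := continuous_det_of (m := m)
  have hD := continuous_det_one_sub_gramMatrix (m := m)
  have ht := continuous_trace_gramMatrix (m := m)
  have hsmall : ∀ᶠ ε : ℝ in 𝓝[>] 0, ε ∈ Set.Ioc 0 1 := Ioc_mem_nhdsGT one_pos
  have hdom : Continuous fun g : m → m → ℝ =>
      ((of g).det ^ 2 + 1) ^ β₁ * (1 - gramMatrix g).det ^ β₂ *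
        (|Fintype.card m ^ 2 - (2 * Fintype.card m + 1) * (gramMatrix g).trace| +
          2 * β₁ * |Fintype.card m - (gramMatrix g).trace| +
          2 * (β₂ + 2) * |(gramMatrix g).trace|) :=
    ((((hd.pow 2).add_const 1).rpow_const fun _ => Or.inr hβ₁).mul
      (hD.rpow_const fun _ => Or.inr hβ₂)).mul (by fun_prop)
  refine tendsto_nhds_unique (tendsto_integral_filter_of_dominated_convergence _ ?_ ?_
    (integrableOn_opNormBall hdom) ?_) (tendsto_const_nhds.congr' (hsmall.mono fun ε hε =>
      (setIntegral_opNormBall_divergence_eq_zero (contDiff_smoothedPow (β := β₁) hε.1)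
        (contDiff_flattenedPow hβ₂ hε.1) (flattenedPow_zero hβ₂)
        (deriv_flattenedPow_zero hβ₂ hε.1)).symm))
  · filter_upwards [hsmall] with ε hε
    have hH := contDiff_smoothedPow (β := β₁) (k := 1) hε.1
    have hF := contDiff_flattenedPow hβ₂ hε.1
    have := hH.continuous_deriv_one
    have := hF.continuous_deriv_one
    exact Continuous.aestronglyMeasurable (by fun_prop)
  · filter_upwards [hsmall] with ε hε
    filter_upwards [ae_restrict_mem isOpen_opNormBall.measurableSet] with g hg
    exact abs_regularized_divergence_le hβ₁ hβ₂ hε (det_one_sub_gramMatrix_pos hg)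
  · filter_upwards [ae_restrict_mem isOpen_opNormBall.measurableSet] with g hg
    rw [antiSphericalDensity, det_gramMatrix]
    exact tendsto_regularized_divergence hβ₁ hβ₂ (det_one_sub_gramMatrix_pos hg)

theorem setIntegral_antiSphericalDensity_mul_trace_gramMatrix (hβ₁ : 0 ≤ β₁) (hβ₂ : 0 ≤ β₂) :
    (2 * Fintype.card m + 1 + 2 * β₁ + 2 * β₂) *
        ∫ g in opNormBall m, antiSphericalDensity β₁ β₂ g * (gramMatrix g).trace =
      Fintype.card m * (Fintype.card m + 2 * β₁) *
        ∫ g in opNormBall m, antiSphericalDensity β₁ β₂ g := by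
  have hρ := continuous_antiSphericalDensity (m := m) hβ₁ hβ₂
  have hρt := hρ.fun_mul continuous_trace_gramMatrix
  rw [eq_comm, ← sub_eq_zero, ← integral_const_mul, ← integral_const_mul,
    ← integral_sub ((integrableOn_opNormBall hρ).const_mul _)
      ((integrableOn_opNormBall hρt).const_mul _),
    ← setIntegral_antiSphericalDensity_mul_divergence_eq_zero (m := m) hβ₁ hβ₂]
  congr 1
  ext g
  ring

end Moment

section LeftMul

lemma measurePreserving_linearMap_of_preimage_eq {E : Type*} [NormedAddCommGroup E]
    [NormedSpace ℝ E] [FiniteDimensional ℝ E] [MeasurableSpace E] [BorelSpace E] (μ : Measure E)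
    [μ.IsAddHaarMeasure] {f : E →ₗ[ℝ] E} (hf : LinearMap.det f ≠ 0) {s : Set E}
    (hs₀ : μ s ≠ 0) (hs : μ s ≠ ⊤) (hfs : f ⁻¹' s = s) : MeasurePreserving f μ μ := by
  have hdet : ENNReal.ofReal |(LinearMap.det f)⁻¹| = 1 := by
    have h := Measure.addHaar_preimage_linearMap μ hf s
    rw [hfs] at h
    exact (ENNReal.mul_eq_right hs₀ hs).1 h.symm
  refine ⟨f.continuous_of_finiteDimensional.measurable, ?_⟩
  rw [Measure.map_linearMap_addHaar_eq_smul_addHaar μ hf, hdet, one_smul]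

variable {m : Type*} [Fintype m]

/-- Left multiplication by a matrix `U`, acting on matrices given by their entries. -/
def leftMul (U : Matrix m m ℝ) : (m → m → ℝ) →ₗ[ℝ] m → m → ℝ := mulLeftLinearMap m ℝ U

lemma of_leftMul (U : Matrix m m ℝ) (g : m → m → ℝ) : of (leftMul U g) = U * of g := rfl

variable [DecidableEq m] {U : Matrix m m ℝ}

lemma gramMatrix_leftMul (hU : U ∈ orthogonalGroup m ℝ) (g : m → m → ℝ) :
    gramMatrix (leftMul U g) = gramMatrix g := by
  rw [gramMatrix, of_leftMul, Matrix.transpose_mul, Matrix.mul_assoc, ← Matrix.mul_assoc Uᵀ,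
    (mem_orthogonalGroup_iff' m ℝ).1 hU, Matrix.one_mul, gramMatrix]

lemma det_leftMul_ne_zero (hU : U ∈ orthogonalGroup m ℝ) : LinearMap.det (leftMul U) ≠ 0 := by
  have hU' : Uᵀ * U = 1 := (mem_orthogonalGroup_iff' m ℝ).1 hU
  have hinv : leftMul Uᵀ ∘ₗ leftMul U = LinearMap.id := by
    refine LinearMap.ext fun g => of.injective ?_
    change Uᵀ * (U * of g) = of g
    rw [← Matrix.mul_assoc, hU', Matrix.one_mul]
  refine right_ne_zero_of_mul (a := LinearMap.det (leftMul Uᵀ)) ?_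
  rw [← LinearMap.det_comp, hinv, LinearMap.det_id]
  exact one_ne_zero

lemma exists_mem_opNormBall_det_ne_zero : ∃ g ∈ opNormBall m, (of g).det ≠ 0 := by
  refine ⟨of.symm ((1 / 2 : ℝ) • 1), ?_, by simp⟩
  have hgram : 1 - gramMatrix (of.symm ((1 / 2 : ℝ) • (1 : Matrix m m ℝ))) = (3 / 4 : ℝ) • 1 := by
    simp only [gramMatrix, Equiv.apply_symm_apply, transpose_smul, transpose_one, smul_mul_smul,
      Matrix.one_mul]
    module
  rw [opNormBall, Set.mem_ofPred_eq, hgram]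
  exact Matrix.PosDef.one.smul (by norm_num)

-- The operator norm ball is a set of finite positive measure preserved by `U`.
lemma volume_preserving_leftMul (hU : U ∈ orthogonalGroup m ℝ) :
    MeasurePreserving (leftMul U) := by
  obtain ⟨g₀, hg₀, -⟩ := exists_mem_opNormBall_det_ne_zero (m := m)
  refine measurePreserving_linearMap_of_preimage_eq volume (det_leftMul_ne_zero hU)
    (isOpen_opNormBall.measure_pos volume ⟨g₀, hg₀⟩).ne' isBounded_opNormBall.measure_lt_top.ne ?_
  ext g
  simp [opNormBall, gramMatrix_leftMul hU]

lemma diagonal_mem_orthogonalGroup {d : m → ℝ} (hd : ∀ i, d i * d i = 1) :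
    diagonal d ∈ orthogonalGroup m ℝ := by
  simp [mem_orthogonalGroup_iff, hd]

lemma swap_mem_orthogonalGroup (i j : m) : swap ℝ i j ∈ orthogonalGroup m ℝ := by
  simp [mem_orthogonalGroup_iff, swap_mul_self]

/-- Invariance of the law of a random matrix `G` under `G ↦ UG` for every orthogonal `U`. -/
def IsLeftOrthogonallyInvariant (ν : Measure (m → m → ℝ)) : Prop :=
  ∀ U ∈ orthogonalGroup m ℝ, MeasurePreserving (leftMul U) ν ν

end LeftMul

section Expansion

variable {m R : Type*} [Fintype m] [DecidableEq m] [CommRing R]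

/-- The term of the multilinear expansion of `det (z I - A)` in which the rows in `S` are taken
from `z I` and the remaining ones from `-A`. -/
def charTerm (z : R) (S : Finset m) (A : Matrix m m R) : R :=
  (of fun i j => if i ∈ S then (z • (1 : Matrix m m R)) i j else -A i j).det

lemma det_smul_one_sub_eq_sum_charTerm (z : R) (A : Matrix m m R) :
    (z • (1 : Matrix m m R) - A).det = ∑ S, charTerm z S A := by
  rw [sub_eq_add_neg]
  refine ((detRowAlternating (n := m) (R := R)).toMultilinearMap.map_add_univ _ _).trans
    (Finset.sum_congr rfl fun S _ => congrArg det ?_)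
  ext i j
  by_cases hi : i ∈ S <;> simp [hi, Finset.piecewise]

lemma charTerm_univ (z : R) (A : Matrix m m R) :
    charTerm z Finset.univ A = z ^ Fintype.card m := by
  have h : charTerm z Finset.univ A = (z • (1 : Matrix m m R)).det :=
    congrArg det (by ext; simp)
  simp [h]

lemma charTerm_univ_erase (z : R) (i : m) (A : Matrix m m R) :
    charTerm z (Finset.univ.erase i) A = -z ^ (Fintype.card m - 1) * A i i := by
  have hrow : (of fun k j => if k ∈ Finset.univ.erase i then (z • (1 : Matrix m m R)) k j
      else -A k j) = (z • (1 : Matrix m m R)).updateRow i fun j => -A i j := by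
    ext k j
    by_cases hk : k = i
    · subst hk
      simp
    · simp [hk]
  rw [charTerm, hrow, ← cramer_transpose_apply, cramer_eq_adjugate_mulVec,
    transpose_smul, transpose_one, adjugate_smul, adjugate_one]
  simp [smul_mulVec]

lemma charTerm_diagonal_mul (z : R) (S : Finset m) (d : m → R) (A : Matrix m m R) :
    charTerm z S (diagonal d * A) = (∏ i ∈ Sᶜ, d i) * charTerm z S A := by
  have hprod : ∏ i ∈ Sᶜ, d i = ∏ i, if i ∈ S then 1 else d i := by
    simp [Finset.prod_ite, Finset.filter_notMem_eq_sdiff, Finset.compl_eq_univ_sdiff]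
  rw [charTerm, charTerm, hprod, ← det_diagonal, ← det_mul]
  congr 1
  ext i j
  by_cases hi : i ∈ S <;> simp [hi, diagonal_mul]

lemma continuous_charTerm [TopologicalSpace R] [IsTopologicalRing R] (z : R) (S : Finset m) :
    Continuous fun A : Matrix m m R => charTerm z S A := by
  refine Continuous.matrix_det (continuous_matrix fun i j => ?_)
  by_cases hi : i ∈ S
  · simpa [hi] using continuous_const
  · simpa [hi] using (continuous_id.matrix_elem i j).fun_neg

end Expansion

section Invariance

variable {m : Type*} [Fintype m] [DecidableEq m] {ν : Measure (m → m → ℝ)}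

lemma integrable_of_continuous_of_isCompact_support {X E : Type*} [TopologicalSpace X]
    [HereditarilyLindelofSpace X] [MeasurableSpace X] [OpensMeasurableSpace X]
    [NormedAddCommGroup E] [SecondCountableTopologyEither X E] {μ : Measure X}
    [IsFiniteMeasure μ] (hμ : IsCompact μ.support) {f : X → E} (hf : Continuous f) :
    Integrable f μ := by
  obtain ⟨C, hC⟩ := hμ.exists_bound_of_continuousOn hf.continuousOn
  exact Integrable.of_bound hf.aestronglyMeasurable C
    (mem_of_superset Measure.support_mem_ae hC)

lemma IsLeftOrthogonallyInvariant.integral_comp_leftMul {E : Type*} [NormedAddCommGroup E]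
    [NormedSpace ℝ E] (hν : IsLeftOrthogonallyInvariant ν) {U : Matrix m m ℝ}
    (hU : U ∈ orthogonalGroup m ℝ) {f : (m → m → ℝ) → E} (hf : Continuous f) :
    ∫ g, f (leftMul U g) ∂ν = ∫ g, f g ∂ν := by
  conv_rhs => rw [← (hν U hU).map_eq]
  exact (integral_map (hν U hU).aemeasurable hf.aestronglyMeasurable).symm

lemma IsLeftOrthogonallyInvariant.integral_eq_zero_of_comp_leftMul_eq_smul {E : Type*}
    [NormedAddCommGroup E] [NormedSpace ℝ E] (hν : IsLeftOrthogonallyInvariant ν) {U : Matrix m m ℝ}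
    (hU : U ∈ orthogonalGroup m ℝ) {f : (m → m → ℝ) → E} (hf : Continuous f) {c : ℝ}
    (hc : c ≠ 1) (hfU : ∀ g, f (leftMul U g) = c • f g) : ∫ g, f g ∂ν = 0 := by
  have h := hν.integral_comp_leftMul hU hf
  simp only [hfU, integral_smul] at h
  have hsub : (c - 1) • ∫ g, f g ∂ν = 0 := by rw [sub_smul, one_smul, h, sub_self]
  exact (smul_eq_zero.1 hsub).resolve_left (sub_ne_zero.2 hc)

/-- The diagonal matrix with entry `-1` in position `k` and `1` elsewhere. -/
def coordReflection (k : m) : Matrix m m ℝ := diagonal (Function.update 1 k (-1))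

lemma coordReflection_mem_orthogonalGroup (k : m) : coordReflection k ∈ orthogonalGroup m ℝ :=
  diagonal_mem_orthogonalGroup fun i => by by_cases hi : i = k <;> simp [hi]

lemma continuous_charTerm_map_ofReal (z : ℂ) (S : Finset m) :
    Continuous fun g : m → m → ℝ => charTerm z S ((of g).map ((↑) : ℝ → ℂ)) :=
  (continuous_charTerm z S).comp (continuous_id.matrix_map Complex.continuous_ofReal)

lemma charTerm_map_leftMul_coordReflection (z : ℂ) (S : Finset m) (k : m) (g : m → m → ℝ) :
    charTerm z S ((of (leftMul (coordReflection k) g)).map ((↑) : ℝ → ℂ)) =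
      (if k ∈ S then 1 else -1 : ℝ) • charTerm z S ((of g).map ((↑) : ℝ → ℂ)) := by
  have hmap : (of (leftMul (coordReflection k) g)).map ((↑) : ℝ → ℂ) =
      diagonal (Function.update 1 k (-1)) * (of g).map ((↑) : ℝ → ℂ) := by
    ext i j
    by_cases hi : i = k <;> simp [of_leftMul, coordReflection, diagonal_mul, hi]
  rw [hmap, charTerm_diagonal_mul]
  by_cases hk : k ∈ S <;> simp [hk, Finset.prod_update_of_mem, Finset.prod_update_of_notMem]

lemma leftMul_coordReflection_diag (k i : m) (g : m → m → ℝ) :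
    leftMul (coordReflection k) g i i = (if i = k then -1 else 1) * g i i := by
  change (coordReflection k * of g) i i = _
  by_cases hi : i = k <;> simp [coordReflection, diagonal_mul, hi]

lemma IsLeftOrthogonallyInvariant.integral_charTerm_eq_zero (hν : IsLeftOrthogonallyInvariant ν)
    (z : ℂ) {S : Finset m} (hS : S ≠ Finset.univ) :
    ∫ g, charTerm z S ((of g).map ((↑) : ℝ → ℂ)) ∂ν = 0 := by
  obtain ⟨k, hk⟩ : ∃ k, k ∉ S := by simpa [Finset.eq_univ_iff_forall] using hS
  refine hν.integral_eq_zero_of_comp_leftMul_eq_smul (coordReflection_mem_orthogonalGroup k)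
    (continuous_charTerm_map_ofReal z S) (c := -1) (by norm_num) fun g => ?_
  rw [charTerm_map_leftMul_coordReflection, if_neg hk]

lemma IsLeftOrthogonallyInvariant.integral_charTerm_mul_diag_eq_zero
    (hν : IsLeftOrthogonallyInvariant ν) (z : ℂ) {S : Finset m} {i : m}
    (hS : S ≠ Finset.univ.erase i) :
    ∫ g, charTerm z S ((of g).map ((↑) : ℝ → ℂ)) * (g i i : ℂ) ∂ν = 0 := by
  obtain ⟨k, hk⟩ : ∃ k, ¬(k ∈ S ↔ k ≠ i) := by
    simpa [Finset.ext_iff] using hS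
  refine hν.integral_eq_zero_of_comp_leftMul_eq_smul (coordReflection_mem_orthogonalGroup k)
    ((continuous_charTerm_map_ofReal z S).mul (by fun_prop)) (c := -1) (by norm_num) fun g => ?_
  rw [charTerm_map_leftMul_coordReflection, leftMul_coordReflection_diag]
  rcases eq_or_ne k i with rfl | hki
  · simp_all
  · simp_all [hki.symm]

lemma IsLeftOrthogonallyInvariant.integral_sq_eq_diag (hν : IsLeftOrthogonallyInvariant ν)
    (i j : m) : ∫ g, g i j ^ 2 ∂ν = ∫ g, g j j ^ 2 ∂ν := by
  rw [← hν.integral_comp_leftMul (swap_mem_orthogonalGroup i j) (by fun_prop)]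
  refine integral_congr_ae (ae_of_all _ fun g => ?_)
  exact congrArg (· ^ 2) (swap_mul_apply_left i j j (of g))

variable [IsFiniteMeasure ν]

theorem IsLeftOrthogonallyInvariant.integral_det_smul_one_sub (hν : IsLeftOrthogonallyInvariant ν)
    (hsupp : IsCompact ν.support) (z : ℂ) :
    ∫ g, (z • (1 : Matrix m m ℂ) - (of g).map ((↑) : ℝ → ℂ)).det ∂ν =
      z ^ Fintype.card m * ν.real Set.univ := by
  simp only [det_smul_one_sub_eq_sum_charTerm]
  rw [integral_finsetSum _ fun S _ => integrable_of_continuous_of_isCompact_support hsupp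
      (continuous_charTerm_map_ofReal z S),
    Finset.sum_eq_single Finset.univ (fun S _ hS => hν.integral_charTerm_eq_zero z hS) (by simp)]
  simp [charTerm_univ, mul_comm]

lemma IsLeftOrthogonallyInvariant.integral_det_smul_one_sub_mul_diag
    (hν : IsLeftOrthogonallyInvariant ν) (hsupp : IsCompact ν.support) (z : ℂ) (i : m) :
    ∫ g, (z • (1 : Matrix m m ℂ) - (of g).map ((↑) : ℝ → ℂ)).det * (g i i : ℂ) ∂ν =
      -z ^ (Fintype.card m - 1) * (∫ g, g i i ^ 2 ∂ν : ℝ) := by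
  have hint (S : Finset m) : Integrable (fun g : m → m → ℝ =>
      charTerm z S ((of g).map ((↑) : ℝ → ℂ)) * (g i i : ℂ)) ν :=
    integrable_of_continuous_of_isCompact_support hsupp
      ((continuous_charTerm_map_ofReal z S).mul (by fun_prop))
  simp only [det_smul_one_sub_eq_sum_charTerm, Finset.sum_mul]
  rw [integral_finsetSum _ fun S _ => hint S, Finset.sum_eq_single (Finset.univ.erase i)
      (fun S _ hS => hν.integral_charTerm_mul_diag_eq_zero z hS) (by simp),
    ← integral_complex_ofReal, ← integral_const_mul]
  simp [charTerm_univ_erase, mul_assoc, pow_two]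

lemma IsLeftOrthogonallyInvariant.integral_trace_gramMatrix (hν : IsLeftOrthogonallyInvariant ν)
    (hsupp : IsCompact ν.support) :
    ∫ g, (gramMatrix g).trace ∂ν = Fintype.card m * ∑ i, ∫ g, g i i ^ 2 ∂ν := by
  have hint (i j : m) : Integrable (fun g : m → m → ℝ => g i j ^ 2) ν :=
    integrable_of_continuous_of_isCompact_support hsupp (by fun_prop)
  have htrace (g : m → m → ℝ) : (gramMatrix g).trace = ∑ j, ∑ i, g i j ^ 2 := by
    simp [gramMatrix, Matrix.trace, Matrix.mul_apply, pow_two]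
  simp only [htrace]
  rw [integral_finsetSum _ fun j _ => integrable_finsetSum _ fun i _ => hint i j, Finset.mul_sum]
  refine Finset.sum_congr rfl fun j _ => ?_
  simp [integral_finsetSum _ fun i _ => hint i j, hν.integral_sq_eq_diag]

theorem IsLeftOrthogonallyInvariant.card_mul_integral_det_smul_one_sub_mul_trace
    (hν : IsLeftOrthogonallyInvariant ν) (hsupp : IsCompact ν.support) (z : ℂ) :
    Fintype.card m * ∫ g, (z • (1 : Matrix m m ℂ) - (of g).map ((↑) : ℝ → ℂ)).det *
        ((of g).trace : ℂ) ∂ν =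
      -z ^ (Fintype.card m - 1) * (∫ g, (gramMatrix g).trace ∂ν : ℝ) := by
  have htrace (g : m → m → ℝ) : ((of g).trace : ℂ) = ∑ i, (g i i : ℂ) := by
    simp [Matrix.trace]
  have hint (i : m) : Integrable (fun g : m → m → ℝ =>
      (z • (1 : Matrix m m ℂ) - (of g).map ((↑) : ℝ → ℂ)).det * (g i i : ℂ)) ν :=
    integrable_of_continuous_of_isCompact_support hsupp ((continuous_const.sub
      (continuous_id.matrix_map Complex.continuous_ofReal)).matrix_det.mul (by fun_prop))
  simp only [htrace, Finset.mul_sum]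
  rw [integral_finsetSum _ fun i _ => hint i, hν.integral_trace_gramMatrix hsupp]
  simp only [hν.integral_det_smul_one_sub_mul_diag hsupp]
  push_cast
  rw [← Finset.mul_sum]
  ring

end Invariance

section Ensemble

variable {N : ℕ} {β₁ β₂ : ℝ}

lemma antiSphericalRealWeight_eq_indicator :
    antiSphericalRealWeight N β₁ β₂ =
      (opNormBall (Fin N)).indicator (antiSphericalDensity β₁ β₂) :=
  rfl

lemma antiSphericalRealWeight_congr {g g' : Fin N → Fin N → ℝ}
    (h : gramMatrix g = gramMatrix g') :
    antiSphericalRealWeight N β₁ β₂ g = antiSphericalRealWeight N β₁ β₂ g' := by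
  have hmem : g ∈ opNormBall (Fin N) ↔ g' ∈ opNormBall (Fin N) := by
    rw [opNormBall, Set.mem_ofPred_eq, Set.mem_ofPred_eq, h]
  by_cases hg : g ∈ opNormBall (Fin N)
  · simp [antiSphericalRealWeight_eq_indicator, hg, hmem.1 hg, antiSphericalDensity, h]
  · simp [antiSphericalRealWeight_eq_indicator, hg, mt hmem.2 hg]

lemma antiSphericalRealWeight_nonneg (g : Fin N → Fin N → ℝ) :
    0 ≤ antiSphericalRealWeight N β₁ β₂ g := by
  refine Set.indicator_nonneg (s := opNormBall (Fin N)) (f := antiSphericalDensity β₁ β₂)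
    (fun g hg => ?_) g
  have hD := det_one_sub_gramMatrix_pos hg
  rw [antiSphericalDensity, det_gramMatrix]
  positivity

lemma integrable_antiSphericalRealWeight (hβ₁ : 0 ≤ β₁) (hβ₂ : 0 ≤ β₂) :
    Integrable (antiSphericalRealWeight N β₁ β₂) :=
  (integrable_indicator_iff isOpen_opNormBall.measurableSet).2
    (integrableOn_opNormBall (continuous_antiSphericalDensity hβ₁ hβ₂))

lemma measurable_antiSphericalRealWeight : Measurable (antiSphericalRealWeight N β₁ β₂) :=
  ((continuous_gramMatrix.matrix_det.measurable.pow_const β₁).mul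
    (continuous_det_one_sub_gramMatrix.measurable.pow_const β₂)).indicator
      isOpen_opNormBall.measurableSet

lemma integral_antiSphericalRealWeight_pos (hβ₁ : 0 ≤ β₁) (hβ₂ : 0 ≤ β₂) :
    0 < ∫ g, antiSphericalRealWeight N β₁ β₂ g := by
  rw [integral_pos_iff_support_of_nonneg antiSphericalRealWeight_nonneg
    (integrable_antiSphericalRealWeight hβ₁ hβ₂)]
  have hopen : IsOpen (opNormBall (Fin N) ∩ {g | (of g).det ≠ 0}) :=
    isOpen_opNormBall.inter (isOpen_ne_fun continuous_det_of continuous_const)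
  refine (hopen.measure_pos volume exists_mem_opNormBall_det_ne_zero).trans_le (measure_mono ?_)
  rintro g ⟨hg, hd : (of g).det ≠ 0⟩
  have hD := det_one_sub_gramMatrix_pos hg
  rw [Function.mem_support, antiSphericalRealWeight_eq_indicator, Set.indicator_of_mem hg,
    antiSphericalDensity, det_gramMatrix]
  positivity

/-- The unnormalized law of the real anti-spherical ensemble. -/
noncomputable def antiSphericalMeasure (N : ℕ) (β₁ β₂ : ℝ) : Measure (Fin N → Fin N → ℝ) :=
  volume.withDensity fun g => ENNReal.ofReal (antiSphericalRealWeight N β₁ β₂ g)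

lemma isFiniteMeasure_antiSphericalMeasure (hβ₁ : 0 ≤ β₁) (hβ₂ : 0 ≤ β₂) :
    IsFiniteMeasure (antiSphericalMeasure N β₁ β₂) :=
  isFiniteMeasure_withDensity_ofReal (integrable_antiSphericalRealWeight hβ₁ hβ₂).2

lemma integral_antiSphericalMeasure {E : Type*} [NormedAddCommGroup E] [NormedSpace ℝ E]
    (f : (Fin N → Fin N → ℝ) → E) :
    ∫ g, f g ∂antiSphericalMeasure N β₁ β₂ = ∫ g, antiSphericalRealWeight N β₁ β₂ g • f g := by
  rw [antiSphericalMeasure, integral_withDensity_eq_integral_toReal_smul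
    measurable_antiSphericalRealWeight.ennreal_ofReal (by simp)]
  simp only [ENNReal.toReal_ofReal (antiSphericalRealWeight_nonneg _)]

lemma antiSphericalMeasure_real_univ :
    (antiSphericalMeasure N β₁ β₂).real Set.univ = ∫ g, antiSphericalRealWeight N β₁ β₂ g := by
  simpa using integral_antiSphericalMeasure (N := N) fun _ => (1 : ℝ)

lemma isCompact_support_antiSphericalMeasure :
    IsCompact (antiSphericalMeasure N β₁ β₂).support := by
  refine isBounded_opNormBall.isCompact_closure.of_isClosed_subset Measure.isClosed_support
    (Measure.support_subset_of_isClosed isClosed_closure ?_)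
  rw [mem_ae_iff, antiSphericalMeasure, withDensity_apply _ isClosed_closure.measurableSet.compl]
  refine setLIntegral_eq_zero isClosed_closure.measurableSet.compl fun g hg => ?_
  have hg' : g ∉ opNormBall (Fin N) := fun h => hg (subset_closure h)
  simp [antiSphericalRealWeight_eq_indicator, hg']

lemma isLeftOrthogonallyInvariant_antiSphericalMeasure :
    IsLeftOrthogonallyInvariant (antiSphericalMeasure N β₁ β₂) := by
  intro U hU
  have hvol := volume_preserving_leftMul hU
  refine ⟨hvol.measurable, Measure.ext fun s hs => ?_⟩
  rw [Measure.map_apply hvol.measurable hs, antiSphericalMeasure,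
    withDensity_apply _ (hvol.measurable hs), withDensity_apply _ hs]
  simpa only [antiSphericalRealWeight_congr (gramMatrix_leftMul hU _)] using
    hvol.setLIntegral_comp_preimage hs
      (measurable_antiSphericalRealWeight (β₁ := β₁) (β₂ := β₂)).ennreal_ofReal

theorem integral_trace_gramMatrix_antiSphericalMeasure (hβ₁ : 0 ≤ β₁) (hβ₂ : 0 ≤ β₂) :
    (2 * N + 1 + 2 * β₁ + 2 * β₂) * ∫ g, (gramMatrix g).trace ∂antiSphericalMeasure N β₁ β₂ =
      N * (N + 2 * β₁) * ∫ g, antiSphericalRealWeight N β₁ β₂ g := by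
  have h := setIntegral_antiSphericalDensity_mul_trace_gramMatrix (m := Fin N) hβ₁ hβ₂
  rw [Fintype.card_fin, ← integral_indicator isOpen_opNormBall.measurableSet,
    ← integral_indicator isOpen_opNormBall.measurableSet] at h
  simpa only [integral_antiSphericalMeasure, antiSphericalRealWeight_eq_indicator,
    smul_eq_mul, Set.indicator_mul_left] using h

theorem integral_antiSphericalRealWeight_mul_det (hβ₁ : 0 ≤ β₁) (hβ₂ : 0 ≤ β₂) (z : ℂ) :
    ∫ g : Fin N → Fin N → ℝ, (antiSphericalRealWeight N β₁ β₂ g : ℂ) *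
        (z • (1 : Matrix (Fin N) (Fin N) ℂ) - (of g).map ((↑) : ℝ → ℂ)).det =
      z ^ N * (∫ g, antiSphericalRealWeight N β₁ β₂ g : ℝ) := by
  have := isFiniteMeasure_antiSphericalMeasure (N := N) hβ₁ hβ₂
  simpa [integral_antiSphericalMeasure, antiSphericalMeasure_real_univ] using
    isLeftOrthogonallyInvariant_antiSphericalMeasure.integral_det_smul_one_sub
      (isCompact_support_antiSphericalMeasure (N := N) (β₁ := β₁) (β₂ := β₂)) z

theorem integral_antiSphericalRealWeight_mul_det_mul_trace (hN : 0 < N) (hβ₁ : 0 ≤ β₁)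
    (hβ₂ : 0 ≤ β₂) (z : ℂ) :
    ∫ g : Fin N → Fin N → ℝ, (antiSphericalRealWeight N β₁ β₂ g : ℂ) *
        ((z • (1 : Matrix (Fin N) (Fin N) ℂ) - (of g).map ((↑) : ℝ → ℂ)).det *
          ((of g).trace : ℂ)) =
      -z ^ (N - 1) * ((β₁ + N / 2) / (β₂ + N + β₁ + 1 / 2) : ℝ) *
        (∫ g, antiSphericalRealWeight N β₁ β₂ g : ℝ) := by
  have := isFiniteMeasure_antiSphericalMeasure (N := N) hβ₁ hβ₂
  have hmean : ∫ g, (gramMatrix g).trace ∂antiSphericalMeasure N β₁ β₂ =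
      N * ((β₁ + N / 2) / (β₂ + N + β₁ + 1 / 2)) * ∫ g, antiSphericalRealWeight N β₁ β₂ g := by
    have h := integral_trace_gramMatrix_antiSphericalMeasure (N := N) hβ₁ hβ₂
    field_simp
    linarith
  have h := isLeftOrthogonallyInvariant_antiSphericalMeasure
    |>.card_mul_integral_det_smul_one_sub_mul_trace
      (isCompact_support_antiSphericalMeasure (N := N) (β₁ := β₁) (β₂ := β₂)) z
  rw [hmean, Fintype.card_fin, integral_antiSphericalMeasure] at h
  refine mul_left_cancel₀ (Nat.cast_ne_zero.2 hN.ne' : (N : ℂ) ≠ 0) ?_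
  simp only [Complex.real_smul] at h
  rw [h]
  push_cast
  ring

end Ensemble

theorem realAntiSpherical_odd_skew_orthogonal_poly_general (N : ℕ) (hN : 0 < N)
    (β₁ β₂ : ℝ) (hβ₁ : 0 ≤ β₁) (hβ₂ : 0 ≤ β₂) (z : ℂ) :
    (∫ g : Fin N → Fin N → ℝ, (antiSphericalRealWeight N β₁ β₂ g : ℂ) *
            ((z • (1 : Matrix (Fin N) (Fin N) ℂ) - (of g).map ((↑) : ℝ → ℂ)).det *
              ((of g).trace : ℂ))) /
        ((∫ g : Fin N → Fin N → ℝ, antiSphericalRealWeight N β₁ β₂ g : ℝ) : ℂ)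
      = -z ^ (N - 1) * (((β₁ + N / 2) / (β₂ + N + β₁ + 1 / 2) : ℝ) : ℂ) ∧
    z * ((∫ g : Fin N → Fin N → ℝ, (antiSphericalRealWeight N β₁ β₂ g : ℂ) *
            (z • (1 : Matrix (Fin N) (Fin N) ℂ) - (of g).map ((↑) : ℝ → ℂ)).det) /
        ((∫ g : Fin N → Fin N → ℝ, antiSphericalRealWeight N β₁ β₂ g : ℝ) : ℂ))
      + (∫ g : Fin N → Fin N → ℝ, (antiSphericalRealWeight N β₁ β₂ g : ℂ) *
            ((z • (1 : Matrix (Fin N) (Fin N) ℂ) - (of g).map ((↑) : ℝ → ℂ)).det *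
              ((of g).trace : ℂ))) /
        ((∫ g : Fin N → Fin N → ℝ, antiSphericalRealWeight N β₁ β₂ g : ℝ) : ℂ)
      = z ^ (N + 1) - z ^ (N - 1) * (((β₁ + N / 2) / (β₂ + N + β₁ + 1 / 2) : ℝ) : ℂ) := by
  have hZ : ((∫ g, antiSphericalRealWeight N β₁ β₂ g : ℝ) : ℂ) ≠ 0 :=
    Complex.ofReal_ne_zero.2 (integral_antiSphericalRealWeight_pos hβ₁ hβ₂).ne'
  rw [integral_antiSphericalRealWeight_mul_det hβ₁ hβ₂,
    integral_antiSphericalRealWeight_mul_det_mul_trace hN hβ₁ hβ₂,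
    mul_div_cancel_right₀ _ hZ, mul_div_cancel_right₀ _ hZ]
  exact ⟨rfl, by ring⟩

/-- For the real anti-spherical ensemble of size `2n` with parameters `(β₁, β₂)`:
`⟨det (z I - G) Tr G⟩ = -z^(2n-1) (β₁+n)/(β₂ + 2n + β₁ + 1/2)`, and consequently the
odd-degree skew orthogonal polynomial `Q_{2n+1}(z) = z ⟨det (z I - G)⟩ + ⟨det (z I - G) Tr G⟩`
equals `z^(2n+1) - z^(2n-1) (β₁+n)/(β₂ + 2n + β₁ + 1/2)`. -/
theorem realAntiSpherical_odd_skew_orthogonal_poly (n : ℕ) (hn : 0 < n)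
    (β₁ β₂ : ℝ) (hβ₁ : 0 ≤ β₁) (hβ₂ : 0 ≤ β₂) (z : ℂ) :
    (∫ g : Fin (2 * n) → Fin (2 * n) → ℝ,
          (antiSphericalRealWeight (2 * n) β₁ β₂ g : ℂ) *
            ((z • (1 : Matrix (Fin (2 * n)) (Fin (2 * n)) ℂ)
              - (Matrix.of g).map ((↑) : ℝ → ℂ)).det * ((Matrix.of g).trace : ℂ))) /
        ((∫ g : Fin (2 * n) → Fin (2 * n) → ℝ, antiSphericalRealWeight (2 * n) β₁ β₂ g : ℝ) : ℂ)
      = -z ^ (2 * n - 1) *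
          (((β₁ + n) / (β₂ + 2 * n + β₁ + 1 / 2) : ℝ) : ℂ) ∧
    z * ((∫ g : Fin (2 * n) → Fin (2 * n) → ℝ,
          (antiSphericalRealWeight (2 * n) β₁ β₂ g : ℂ) *
            (z • (1 : Matrix (Fin (2 * n)) (Fin (2 * n)) ℂ)
              - (Matrix.of g).map ((↑) : ℝ → ℂ)).det) /
        ((∫ g : Fin (2 * n) → Fin (2 * n) → ℝ, antiSphericalRealWeight (2 * n) β₁ β₂ g : ℝ) : ℂ))
      + (∫ g : Fin (2 * n) → Fin (2 * n) → ℝ,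
          (antiSphericalRealWeight (2 * n) β₁ β₂ g : ℂ) *
            ((z • (1 : Matrix (Fin (2 * n)) (Fin (2 * n)) ℂ)
              - (Matrix.of g).map ((↑) : ℝ → ℂ)).det * ((Matrix.of g).trace : ℂ))) /
        ((∫ g : Fin (2 * n) → Fin (2 * n) → ℝ, antiSphericalRealWeight (2 * n) β₁ β₂ g : ℝ) : ℂ)
      = z ^ (2 * n + 1) - z ^ (2 * n - 1) *
          (((β₁ + n) / (β₂ + 2 * n + β₁ + 1 / 2) : ℝ) : ℂ) := by
  simpa [mul_div_cancel_left₀] using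
    realAntiSpherical_odd_skew_orthogonal_poly_general (2 * n) (by omega) β₁ β₂ hβ₁ hβ₂ z
end
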